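/- arXiv:math/0510601 — 5 statements merged into one kernel-verified Lean document; each statement's English description precedes it below -/
import Mathlib

section
/- Let X be a Polish space, μ a Borel probability measure on X, and c : X × X → [0,∞) a continuous cost function with c(x,x) = 0 for all x ∈ X. Suppose α in the class C satisfies the transportation cost inequality α(T_c(μ,ν)) ≤ H(ν|μ) for all Borel probability measures ν on X. Then for every n ≥ 1 and every Borel probability measure ζ on X^n, n · α( T_{c^{⊕n}}(μ^{⊗n}, ζ) / n ) ≤ H(ζ|μ^{⊗n}), where c^{⊕n}((x_1,…,x_n),(y_1,…,y_n)) = c(x_1,y_1) + ⋯ + c(x_n,y_n) and μ^{⊗n} is the n-fold product measure. -/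
open MeasureTheory ENNReal Set
open scoped NNReal ENNReal

noncomputable section

/-- The class 𝒞 of convex, nondecreasing, left continuous functions vanishing at 0,
extended to `ℝ≥0∞` (left continuity at `∞` encodes the convention `α ∞ = lim α`). -/
def ClassCFun (α : ℝ≥0∞ → ℝ≥0∞) : Prop :=
  Monotone α ∧ α 0 = 0 ∧
    (∀ (s t : ℝ≥0∞) (p q : ℝ≥0), p + q = 1 →
      α ((p : ℝ≥0∞) * s + (q : ℝ≥0∞) * t) ≤ (p : ℝ≥0∞) * α s + (q : ℝ≥0∞) * α t) ∧
    ∀ x : ℝ≥0∞, x ≠ 0 → α x = ⨆ y ∈ Set.Iio x, α y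

open scoped Classical in
/-- Relative entropy `H(ν|μ)`. -/
def relEntropy {X : Type*} [MeasurableSpace X] (ν μ : Measure X) : ℝ≥0∞ :=
  if ν ≪ μ ∧ Integrable (fun x => Real.log (ν.rnDeriv μ x).toReal) ν
  then ENNReal.ofReal (∫ x, Real.log (ν.rnDeriv μ x).toReal ∂ν) else ⊤

/-- Optimal transportation cost for the cost function `c`. -/
def optTransportCost {X : Type*} [MeasurableSpace X] (c : X → X → ℝ)
    (μ ν : Measure X) : ℝ≥0∞ :=
  ⨅ (π : Measure (X × X)) (_ : π.map Prod.fst = μ ∧ π.map Prod.snd = ν),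
    ∫⁻ p, ENNReal.ofReal (c p.1 p.2) ∂π

/-!
By induction on the number of factors it suffices to treat a product `Y × Z`. Given `ζ` on `Y × Z`,
transport the first coordinate by an almost optimal coupling and, conditionally on it, the second
one by almost optimal couplings. To choose the latter measurably, the conditional laws of `ζ` are
first averaged over the cells of a countable partition of `Y`. The chain rule splits the entropy
and Jensen's inequality moves `α` inside the average of the conditional costs. Averaging does not
increase the entropy bound, and as the cells shrink the averaged measures converge weakly to `ζ`;
lower semicontinuity of the transport cost and left continuity of `α` give the inequality for `ζ`.
-/

open ProbabilityTheory InformationTheory Filter Topology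

namespace ClassCFun

variable {α : ℝ≥0∞ → ℝ≥0∞}

protected theorem monotone (hα : ClassCFun α) : Monotone α := hα.1

theorem map_zero (hα : ClassCFun α) : α 0 = 0 := hα.2.1

theorem map_add_le (hα : ClassCFun α) {p q : ℝ≥0∞} (hpq : p + q = 1) (s t : ℝ≥0∞) :
    α (p * s + q * t) ≤ p * α s + q * α t := by
  have hfin : p + q ≠ ∞ := hpq ▸ one_ne_top
  lift p to ℝ≥0 using (ENNReal.add_ne_top.1 hfin).1
  lift q to ℝ≥0 using (ENNReal.add_ne_top.1 hfin).2
  exact hα.2.2.1 s t p q (mod_cast hpq)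

theorem le_of_forall_lt (hα : ClassCFun α) {x r : ℝ≥0∞} (h : ∀ y < x, α y ≤ r) : α x ≤ r := by
  rcases eq_or_ne x 0 with rfl | hx
  · simp [hα.map_zero]
  · exact (hα.2.2.2 x hx).trans_le (iSup₂_le h)

theorem map_sum_le (hα : ClassCFun α) {ι : Type*} (x : ι → ℝ≥0∞) (s : Finset ι)
    (w : ι → ℝ≥0∞) (hw : ∑ i ∈ s, w i ≤ 1) :
    α (∑ i ∈ s, w i * x i) ≤ ∑ i ∈ s, w i * α (x i) := by
  classical
  induction s using Finset.induction_on generalizing w with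
  | empty => simp [hα.map_zero]
  | insert a s ha ih =>
    rw [Finset.sum_insert ha] at hw
    obtain ⟨q, hq⟩ : ∃ q, w a + q = 1 :=
      (exists_add_of_le (le_self_add.trans hw)).imp fun _ => Eq.symm
    have hwa_ne : w a ≠ ∞ := (le_self_add.trans_lt (hq.trans_lt one_lt_top)).ne
    have hq_ne : q ≠ ∞ := (le_add_self.trans_lt (hq.trans_lt one_lt_top)).ne
    have hsq : ∑ i ∈ s, w i ≤ q := (ENNReal.add_le_add_iff_left hwa_ne).1 (hw.trans_eq hq.symm)
    have rescale (y : ι → ℝ≥0∞) : q * ∑ i ∈ s, w i / q * y i = ∑ i ∈ s, w i * y i := by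
      rw [Finset.mul_sum]
      refine Finset.sum_congr rfl fun i hi => ?_
      have hiq : w i ≤ q := (Finset.single_le_sum_of_canonicallyOrdered hi).trans hsq
      rw [← mul_assoc, ENNReal.mul_div_cancel' (fun h => by simpa [h] using hiq) (absurd · hq_ne)]
    have hsum : ∑ i ∈ s, w i / q ≤ 1 := by
      simp only [div_eq_mul_inv, ← Finset.sum_mul]
      exact ENNReal.div_le_of_le_mul (by rwa [one_mul])
    rw [Finset.sum_insert ha, Finset.sum_insert ha, ← rescale x, ← rescale fun i => α (x i)]
    grw [hα.map_add_le hq, ih _ hsum]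

theorem map_lintegral_le (hα : ClassCFun α) {Ω : Type*} [MeasurableSpace Ω] {m : Measure Ω}
    (hm : m univ ≤ 1) (f : Ω → ℝ≥0∞) : α (∫⁻ x, f x ∂m) ≤ ∫⁻ x, α (f x) ∂m := by
  refine hα.le_of_forall_lt fun y hy => ?_
  obtain ⟨φ, hφf, hyφ⟩ : ∃ φ : SimpleFunc Ω ℝ≥0∞, φ ≤ f ∧ y < φ.lintegral m := by
    simpa only [lintegral, lt_iSup_iff, exists_prop] using hy
  have hweights : ∑ r ∈ φ.range, m (φ ⁻¹' {r}) ≤ 1 := by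
    rwa [φ.sum_range_measure_preimage_singleton]
  calc α y ≤ α (φ.lintegral m) := hα.monotone hyφ.le
    _ ≤ ∑ r ∈ φ.range, m (φ ⁻¹' {r}) * α r := by
      simp only [SimpleFunc.lintegral, mul_comm _ (m _)]
      exact hα.map_sum_le id _ _ hweights
    _ = ∫⁻ x, α (φ x) ∂m := by
      simp only [mul_comm (m _), ← SimpleFunc.map_lintegral, ← SimpleFunc.lintegral_eq_lintegral,
        SimpleFunc.map_apply]
    _ ≤ ∫⁻ x, α (f x) ∂m := lintegral_mono fun x => hα.monotone (hφf x)

theorem comp_lowerSemicontinuous (hα : ClassCFun α) {E : Type*} [TopologicalSpace E]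
    {f : E → ℝ≥0∞} (hf : LowerSemicontinuous f) : LowerSemicontinuous fun x => α (f x) := by
  intro x r hr
  obtain ⟨y, hyx, hry⟩ : ∃ y < f x, r < α y := by
    by_contra! h
    exact hr.not_ge (hα.le_of_forall_lt h)
  filter_upwards [hf x y hyx] with x' hx'
  exact hry.trans_le (hα.monotone hx'.le)

end ClassCFun

/-- The perspective `(t, x) ↦ t α(x / t)` of `α`, meaningful for `0 < t < ∞`. -/
def perspective (α : ℝ≥0∞ → ℝ≥0∞) (t x : ℝ≥0∞) : ℝ≥0∞ := t * α (x / t)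

theorem perspective_one (α : ℝ≥0∞ → ℝ≥0∞) : perspective α 1 = α := by
  ext x
  simp [perspective]

namespace ClassCFun

variable {α : ℝ≥0∞ → ℝ≥0∞}

protected theorem perspective (hα : ClassCFun α) {t : ℝ≥0∞} (ht0 : t ≠ 0) (ht : t ≠ ∞) :
    ClassCFun (perspective α t) := by
  have hmono : Monotone (perspective α t) := fun x y hxy => by
    unfold perspective
    gcongr
    exact hα.monotone (by gcongr)
  refine ⟨hmono, by simp [perspective, hα.map_zero], fun x y p q hpq => ?_, fun x _ => ?_⟩
  · calc t * α ((p * x + q * y) / t) = t * α (p * (x / t) + q * (y / t)) := by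
          rw [ENNReal.add_div, mul_div_assoc, mul_div_assoc]
      _ ≤ t * (p * α (x / t) + q * α (y / t)) := by grw [hα.map_add_le (mod_cast hpq)]
      _ = p * (t * α (x / t)) + q * (t * α (y / t)) := by ring
  · refine le_antisymm ?_ (iSup₂_le fun y hy => hmono (le_of_lt hy))
    rw [perspective, mul_comm, ← ENNReal.le_div_iff_mul_le (.inl ht0) (.inl ht)]
    refine hα.le_of_forall_lt fun y hy => ?_
    rw [ENNReal.le_div_iff_mul_le (.inl ht0) (.inl ht)]
    have hyt : y * t < x := (ENNReal.lt_div_iff_mul_lt (.inl ht0) (.inl ht)).1 hy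
    refine le_iSup₂_of_le (y * t) hyt ?_
    rw [perspective, ENNReal.mul_div_cancel_right ht0 ht, mul_comm]

theorem perspective_add_le (hα : ClassCFun α) {s t : ℝ≥0∞} (hs0 : s ≠ 0) (hs : s ≠ ∞)
    (ht0 : t ≠ 0) (ht : t ≠ ∞) (x y : ℝ≥0∞) :
    perspective α (s + t) (x + y) ≤ perspective α s x + perspective α t y := by
  have hst0 : s + t ≠ 0 := by simp [hs0]
  have hst : s + t ≠ ∞ := ENNReal.add_ne_top.2 ⟨hs, ht⟩
  have hweights : s / (s + t) + t / (s + t) = 1 := by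
    rw [← ENNReal.add_div, ENNReal.div_self hst0 hst]
  have hmean : (x + y) / (s + t) = s / (s + t) * (x / s) + t / (s + t) * (y / t) := by
    rw [ENNReal.add_div, mul_comm (s / _), mul_comm (t / _), ← mul_div_assoc, ← mul_div_assoc,
      ENNReal.div_mul_cancel hs0 hs, ENNReal.div_mul_cancel ht0 ht]
  calc (s + t) * α ((x + y) / (s + t))
      ≤ (s + t) * (s / (s + t) * α (x / s) + t / (s + t) * α (y / t)) := by
        grw [hmean, hα.map_add_le hweights]
    _ = s * α (x / s) + t * α (y / t) := by
        rw [mul_add, ← mul_assoc, ← mul_assoc, ENNReal.mul_div_cancel hst0 hst,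
          ENNReal.mul_div_cancel hst0 hst]

end ClassCFun

theorem relEntropy_eq_klDiv {E : Type*} [MeasurableSpace E] {ν μ : Measure E}
    (h : ν univ = μ univ) : relEntropy ν μ = klDiv ν μ := by
  by_cases hac : ν ≪ μ ∧ Integrable (llr ν μ) ν
  · have hreal : ν.real univ = μ.real univ := congrArg ENNReal.toReal h
    rw [klDiv_of_ac_of_integrable hac.1 hac.2, hreal, add_sub_cancel_right]
    exact if_pos hac
  · rw [klDiv_eq_top_iff.2 (not_and.1 hac)]
    exact if_neg hac

section KernelEntropy

variable {A B : Type*} [MeasurableSpace A] [MeasurableSpace B]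
  [MeasurableSpace.CountableOrCountablyGenerated A B]
  {m : Measure A} [IsFiniteMeasure m] {κ η : Kernel A B} [IsFiniteKernel κ] [IsFiniteKernel η]

theorem rnDeriv_compProd_right (hac : ∀ᵐ a ∂m, κ a ≪ η a) :
    (m ⊗ₘ κ).rnDeriv (m ⊗ₘ η) =ᵐ[m ⊗ₘ η] fun p => κ.rnDeriv η p.1 p.2 := by
  have hκ : m ⊗ₘ κ = (m ⊗ₘ η).withDensity fun p => κ.rnDeriv η p.1 p.2 := by
    rw [← Measure.compProd_withDensity (by fun_prop)]
    exact Measure.compProd_congr (hac.mono fun a ha => (Kernel.withDensity_rnDeriv_eq ha).symm)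
  rw [hκ]
  exact Measure.rnDeriv_withDensity _ (Kernel.measurable_rnDeriv κ η)

theorem lintegral_klDiv_eq_of_ac (hac : ∀ᵐ a ∂m, κ a ≪ η a) :
    ∫⁻ a, klDiv (κ a) (η a) ∂m = klDiv (m ⊗ₘ κ) (m ⊗ₘ η) := by
  have hint : ∀ᵐ a ∂m, klDiv (κ a) (η a) =
      ∫⁻ b, ENNReal.ofReal (klFun (κ.rnDeriv η a b).toReal) ∂η a := by
    filter_upwards [hac] with a ha
    rw [klDiv_eq_lintegral_klFun_of_ac ha]
    refine lintegral_congr_ae ?_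
    filter_upwards [Kernel.rnDeriv_eq_rnDeriv_measure (κ := κ) (η := η) (a := a)] with b hb
    rw [hb]
  calc ∫⁻ a, klDiv (κ a) (η a) ∂m
      = ∫⁻ p, ENNReal.ofReal (klFun (κ.rnDeriv η p.1 p.2).toReal) ∂(m ⊗ₘ η) := by
        rw [lintegral_congr_ae hint, Measure.lintegral_compProd (by fun_prop)]
    _ = klDiv (m ⊗ₘ κ) (m ⊗ₘ η) := by
        rw [klDiv_eq_lintegral_klFun_of_ac (Measure.absolutelyContinuous_compProd_right_iff.2 hac)]
        refine lintegral_congr_ae ?_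
        filter_upwards [rnDeriv_compProd_right hac] with p hp
        rw [hp]

theorem lintegral_klDiv : ∫⁻ a, klDiv (κ a) (η a) ∂m = klDiv (m ⊗ₘ κ) (m ⊗ₘ η) := by
  by_cases hac : ∀ᵐ a ∂m, κ a ≪ η a
  · exact lintegral_klDiv_eq_of_ac hac
  · have hmeas : MeasurableSet {a | ¬ κ a ≪ η a} :=
      (Kernel.measurableSet_absolutelyContinuous κ η).compl
    rw [klDiv_of_not_ac (mt Measure.absolutelyContinuous_compProd_right_iff.1 hac), eq_top_iff]
    calc ∞ = ∫⁻ _ in {a | ¬ κ a ≪ η a}, ∞ ∂m := by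
          rw [setLIntegral_const, top_mul (mt ae_iff.2 hac)]
      _ = ∫⁻ a in {a | ¬ κ a ≪ η a}, klDiv (κ a) (η a) ∂m :=
          setLIntegral_congr_fun hmeas fun _ ha => (klDiv_of_not_ac ha).symm
      _ ≤ ∫⁻ a, klDiv (κ a) (η a) ∂m := setLIntegral_le_lintegral _ _

end KernelEntropy

theorem klDiv_fst_add_lintegral_klDiv_le {Y Z S : Type*} [MeasurableSpace Y] [MeasurableSpace Z]
    [StandardBorelSpace Z] [Nonempty Z] [MeasurableSpace S]
    [MeasurableSpace.CountableOrCountablyGenerated S Z]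
    {ζ : Measure (Y × Z)} [IsFiniteMeasure ζ] (P : Measure Y) [IsFiniteMeasure P]
    (Q : Measure Z) [IsProbabilityMeasure Q] {g : Y → S} (hg : Measurable g)
    {κ : Kernel S Z} [IsMarkovKernel κ] (hκ : ζ.fst.map g ⊗ₘ κ = ζ.map (Prod.map g id)) :
    klDiv ζ.fst P + ∫⁻ s, klDiv (κ s) Q ∂(ζ.fst.map g) ≤ klDiv ζ (P.prod Q) := by
  have hchain : klDiv ζ (P.prod Q) = klDiv ζ.fst P + klDiv ζ (ζ.fst.prod Q) := by
    simpa only [Measure.disintegrate, Measure.compProd_const] using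
      klDiv_compProd_eq_add ζ.fst P ζ.condKernel (Kernel.const Y Q)
  have hprod : (ζ.fst.prod Q).map (Prod.map g id) = (ζ.fst.map g).prod Q := by
    rw [← Measure.map_prod_map _ _ hg measurable_id, Measure.map_id]
  rw [hchain]
  gcongr
  calc ∫⁻ s, klDiv (κ s) Q ∂(ζ.fst.map g)
      = klDiv (ζ.fst.map g ⊗ₘ κ) (ζ.fst.map g ⊗ₘ Kernel.const S Q) := by
        simpa only [Kernel.const_apply] using
          lintegral_klDiv (m := ζ.fst.map g) (κ := κ) (η := Kernel.const S Q)
    _ = klDiv (ζ.map (Prod.map g id)) ((ζ.fst.prod Q).map (Prod.map g id)) := by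
        rw [hκ, hprod, Measure.compProd_const]
    _ ≤ klDiv ζ (ζ.fst.prod Q) := klDiv_map_le _ _ (hg.prodMap measurable_id)

theorem map_prodMap_compProd {A A' B B' : Type*} [MeasurableSpace A] [MeasurableSpace A']
    [MeasurableSpace B] [MeasurableSpace B'] {μ : Measure A} [SFinite μ] {κ : Kernel A B}
    [IsSFiniteKernel κ] {η : Kernel A' B'} [IsSFiniteKernel η] {f : A → A'} {g : B → B'}
    (hf : Measurable f) (hg : Measurable g) (h : ∀ a, (κ a).map g = η (f a)) :
    (μ ⊗ₘ κ).map (Prod.map f g) = μ.map f ⊗ₘ η := by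
  ext s hs
  rw [Measure.map_apply (hf.prodMap hg) hs, Measure.compProd_apply (hf.prodMap hg hs),
    Measure.compProd_apply hs, lintegral_map (Kernel.measurable_kernel_prodMk_left hs) hf]
  refine lintegral_congr fun a => ?_
  rw [← h a, Measure.map_apply hg (measurable_prodMk_left hs)]
  rfl

/-- `π` is a coupling (transport plan) of `μ` and `ν`: a measure with these marginals. -/
structure IsCoupling {Y Z : Type*} [MeasurableSpace Y] [MeasurableSpace Z]
    (π : Measure (Y × Z)) (μ : Measure Y) (ν : Measure Z) : Prop where
  map_fst : π.map Prod.fst = μ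
  map_snd : π.map Prod.snd = ν

section Coupling

variable {Y Y' Z Z' : Type*} [MeasurableSpace Y] [MeasurableSpace Y'] [MeasurableSpace Z]
  [MeasurableSpace Z']

theorem measurable_prodProdProdComm : Measurable (Equiv.prodProdProdComm Y Y' Z Z') :=
  Measurable.prodMk (f := fun p : (Y × Y') × Z × Z' => (p.1.1, p.2.1)) (by fun_prop) (by fun_prop)

namespace IsCoupling

theorem prod (μ : Measure Y) [IsProbabilityMeasure μ] (ν : Measure Y') [IsProbabilityMeasure ν] :
    IsCoupling (μ.prod ν) μ ν :=
  ⟨Measure.fst_prod, Measure.snd_prod⟩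

variable {π : Measure (Y × Y')} {μ : Measure Y} {ν : Measure Y'}

theorem isProbabilityMeasure [IsProbabilityMeasure μ] (hπ : IsCoupling π μ ν) :
    IsProbabilityMeasure π :=
  have : IsProbabilityMeasure (π.map Prod.fst) := hπ.map_fst ▸ inferInstance
  Measure.isProbabilityMeasure_of_map Prod.fst

theorem map_prodMap (hπ : IsCoupling π μ ν) {f : Y → Z} {g : Y' → Z'} (hf : Measurable f)
    (hg : Measurable g) : IsCoupling (π.map (Prod.map f g)) (μ.map f) (ν.map g) where
  map_fst := by
    rw [← hπ.map_fst, Measure.map_map measurable_fst (hf.prodMap hg),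
      Measure.map_map hf measurable_fst]
    rfl
  map_snd := by
    rw [← hπ.map_snd, Measure.map_map measurable_snd (hf.prodMap hg),
      Measure.map_map hg measurable_snd]
    rfl

theorem compProd [SFinite π] (hπ : IsCoupling π μ ν) {K : Kernel (Y × Y') (Z × Z')}
    [IsSFiniteKernel K] {η : Kernel Y Z} [IsSFiniteKernel η] {κ : Kernel Y' Z'}
    [IsSFiniteKernel κ] (hK : ∀ p, IsCoupling (K p) (η p.1) (κ p.2)) :
    IsCoupling ((π ⊗ₘ K).map (Equiv.prodProdProdComm Y Y' Z Z')) (μ ⊗ₘ η) (ν ⊗ₘ κ) where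
  map_fst := by
    rw [← hπ.map_fst, ← map_prodMap_compProd measurable_fst measurable_fst fun p => (hK p).map_fst,
      Measure.map_map measurable_fst measurable_prodProdProdComm]
    rfl
  map_snd := by
    rw [← hπ.map_snd, ← map_prodMap_compProd measurable_snd measurable_snd fun p => (hK p).map_snd,
      Measure.map_map measurable_snd measurable_prodProdProdComm]
    rfl

end IsCoupling

end Coupling

section TransportCost

variable {E : Type*} [MeasurableSpace E] {c : E → E → ℝ} {P Q : Measure E}

theorem IsCoupling.optTransportCost_le {π : Measure (E × E)} (hπ : IsCoupling π P Q) :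
    optTransportCost c P Q ≤ ∫⁻ p, ENNReal.ofReal (c p.1 p.2) ∂π :=
  iInf₂_le π ⟨hπ.map_fst, hπ.map_snd⟩

theorem exists_isCoupling_lintegral_le (c : E → E → ℝ) (P Q : Measure E) [IsProbabilityMeasure P]
    [IsProbabilityMeasure Q] {ε : ℝ≥0∞} (hε : ε ≠ 0) :
    ∃ π, IsCoupling π P Q ∧ ∫⁻ p, ENNReal.ofReal (c p.1 p.2) ∂π ≤ optTransportCost c P Q + ε := by
  by_cases hT : optTransportCost c P Q = ∞
  · exact ⟨P.prod Q, .prod P Q, by simp [hT]⟩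
  · obtain ⟨π, hπ⟩ := iInf_lt_iff.1 (ENNReal.lt_add_right hT hε)
    obtain ⟨hmarginals, hlt⟩ := iInf_lt_iff.1 hπ
    exact ⟨π, ⟨hmarginals.1, hmarginals.2⟩, hlt.le⟩

theorem optTransportCost_comp_le {F : Type*} [MeasurableSpace F] (c : F → F → ℝ) (e : E ≃ᵐ F)
    (P Q : Measure E) :
    optTransportCost (fun x y => c (e x) (e y)) P Q ≤ optTransportCost c (P.map e) (Q.map e) := by
  refine le_iInf₂ fun π hπ => ?_
  have hcoupling : IsCoupling (π.map (Prod.map e.symm e.symm)) P Q := by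
    simpa only [MeasurableEquiv.map_symm_map] using
      (IsCoupling.mk hπ.1 hπ.2).map_prodMap e.symm.measurable e.symm.measurable
  refine hcoupling.optTransportCost_le.trans_eq ?_
  refine (lintegral_map_equiv _ (e.symm.prodCongr e.symm)).trans ?_
  simp [MeasurableEquiv.prodCongr]

end TransportCost

section Gluing

variable {Y Z : Type*} [MeasurableSpace Y] [MeasurableSpace Z] {cY : Y → Y → ℝ} {cZ : Z → Z → ℝ}

theorem IsCoupling.optTransportCost_compProd_le
    (hcY : Measurable fun p : Y × Y => cY p.1 p.2) (hcZ : Measurable fun p : Z × Z => cZ p.1 p.2)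
    {P P' : Measure Y} {π : Measure (Y × Y)} [SFinite π] (hπ : IsCoupling π P P')
    {η κ : Kernel Y Z} [IsSFiniteKernel η] [IsSFiniteKernel κ] {K : Kernel (Y × Y) (Z × Z)}
    [IsMarkovKernel K] (hK : ∀ p, IsCoupling (K p) (η p.1) (κ p.2)) :
    optTransportCost (fun p q : Y × Z => cY p.1 q.1 + cZ p.2 q.2) (P ⊗ₘ η) (P' ⊗ₘ κ) ≤
      ∫⁻ p, ENNReal.ofReal (cY p.1 p.2) ∂π +
        ∫⁻ p, ∫⁻ q, ENNReal.ofReal (cZ q.1 q.2) ∂K p ∂π := by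
  have hcost : Measurable fun t : (Y × Z) × (Y × Z) =>
      ENNReal.ofReal (cY t.1.1 t.2.1 + cZ t.1.2 t.2.2) := by fun_prop
  have hsplit (p : Y × Y) : ∫⁻ q, ENNReal.ofReal (cY p.1 p.2 + cZ q.1 q.2) ∂K p ≤
      ENNReal.ofReal (cY p.1 p.2) + ∫⁻ q, ENNReal.ofReal (cZ q.1 q.2) ∂K p := by
    grw [ENNReal.ofReal_add_le, lintegral_add_left measurable_const, lintegral_const, measure_univ,
      mul_one]
  refine (hπ.compProd hK).optTransportCost_le.trans ?_
  calc ∫⁻ t, ENNReal.ofReal (cY t.1.1 t.2.1 + cZ t.1.2 t.2.2)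
        ∂(π ⊗ₘ K).map (Equiv.prodProdProdComm Y Y Z Z)
      = ∫⁻ p, ∫⁻ q, ENNReal.ofReal (cY p.1 p.2 + cZ q.1 q.2) ∂K p ∂π := by
        rw [lintegral_map hcost measurable_prodProdProdComm]
        exact Measure.lintegral_compProd (hcost.comp measurable_prodProdProdComm)
    _ ≤ ∫⁻ p, (ENNReal.ofReal (cY p.1 p.2) + ∫⁻ q, ENNReal.ofReal (cZ q.1 q.2) ∂K p) ∂π :=
        lintegral_mono hsplit
    _ = ∫⁻ p, ENNReal.ofReal (cY p.1 p.2) ∂π +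
          ∫⁻ p, ∫⁻ q, ENNReal.ofReal (cZ q.1 q.2) ∂K p ∂π := lintegral_add_left (by fun_prop) _

-- Countability of `S` makes any choice of almost optimal couplings of `Q` and `κ s` measurable.
theorem optTransportCost_compProd_comap_le {S : Type*} [MeasurableSpace S] [Countable S]
    [MeasurableSingletonClass S]
    (hcY : Measurable fun p : Y × Y => cY p.1 p.2) (hcZ : Measurable fun p : Z × Z => cZ p.1 p.2)
    (P P' : Measure Y) [IsProbabilityMeasure P] [IsProbabilityMeasure P']
    (Q : Measure Z) [IsProbabilityMeasure Q] {g : Y → S} (hg : Measurable g)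
    (κ : Kernel S Z) [IsMarkovKernel κ] :
    optTransportCost (fun p q : Y × Z => cY p.1 q.1 + cZ p.2 q.2) (P.prod Q)
        (P' ⊗ₘ κ.comap g hg) ≤
      optTransportCost cY P P' + ∫⁻ s, optTransportCost cZ Q (κ s) ∂(P'.map g) := by
  refine ENNReal.le_of_forall_pos_le_add fun ε hε _ => ?_
  have hε2 : (ε : ℝ≥0∞) / 2 ≠ 0 := (ENNReal.half_pos (mod_cast hε.ne')).ne'
  obtain ⟨π, hπ, hcostπ⟩ := exists_isCoupling_lintegral_le cY P P' hε2
  choose ρ hρ hcostρ using fun s => exists_isCoupling_lintegral_le cZ Q (κ s) hε2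
  have : IsProbabilityMeasure π := hπ.isProbabilityMeasure
  let K : Kernel S (Z × Z) := ⟨ρ, measurable_of_countable ρ⟩
  have : IsMarkovKernel K := ⟨fun s => (hρ s).isProbabilityMeasure⟩
  have hgsnd : Measurable fun p : Y × Y => g p.2 := by fun_prop
  have hKcoupling (p : Y × Y) : IsCoupling (K.comap _ hgsnd p) (Kernel.const Y Q p.1)
      (κ.comap g hg p.2) := hρ (g p.2)
  have hcostK : ∫⁻ p, ∫⁻ q, ENNReal.ofReal (cZ q.1 q.2) ∂K.comap _ hgsnd p ∂π ≤
      ∫⁻ s, optTransportCost cZ Q (κ s) ∂(P'.map g) + ε / 2 := by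
    calc ∫⁻ p, ∫⁻ q, ENNReal.ofReal (cZ q.1 q.2) ∂ρ (g p.2) ∂π
        ≤ ∫⁻ p, (optTransportCost cZ Q (κ (g p.2)) + ε / 2) ∂π :=
          lintegral_mono fun p => hcostρ (g p.2)
      _ = ∫⁻ s, optTransportCost cZ Q (κ s) ∂(P'.map g) + ε / 2 := by
          rw [lintegral_add_right _ measurable_const, lintegral_const, measure_univ, mul_one,
            ← hπ.map_snd, Measure.map_map hg measurable_snd,
            lintegral_map (measurable_of_countable _) (hg.comp measurable_snd)]
          rfl
  calc optTransportCost (fun p q : Y × Z => cY p.1 q.1 + cZ p.2 q.2) (P.prod Q)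
        (P' ⊗ₘ κ.comap g hg)
      ≤ ∫⁻ p, ENNReal.ofReal (cY p.1 p.2) ∂π +
          ∫⁻ p, ∫⁻ q, ENNReal.ofReal (cZ q.1 q.2) ∂K.comap _ hgsnd p ∂π := by
        rw [← Measure.compProd_const]
        exact hπ.optTransportCost_compProd_le hcY hcZ hKcoupling
    _ ≤ optTransportCost cY P P' + ε / 2 +
          (∫⁻ s, optTransportCost cZ Q (κ s) ∂(P'.map g) + ε / 2) := add_le_add hcostπ hcostK
    _ = optTransportCost cY P P' + ∫⁻ s, optTransportCost cZ Q (κ s) ∂(P'.map g) + ε := by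
        rw [add_add_add_comm, ENNReal.add_halves]

end Gluing

section LowerSemicontinuity

variable {E : Type*} [TopologicalSpace E] [PolishSpace E] [MeasurableSpace E] [BorelSpace E]

theorem isTightMeasureSet_range_of_tendsto {ν : ProbabilityMeasure E}
    {νs : ℕ → ProbabilityMeasure E} (h : Tendsto νs atTop (𝓝 ν)) :
    IsTightMeasureSet (range fun N => (νs N : Measure E)) := by
  let := TopologicalSpace.upgradeIsCompletelyMetrizable E
  have hcompact : IsCompact (closure (insert ν (range νs))) := h.isCompact_insert_range.closure
  refine (isTightMeasureSet_of_isCompact_closure hcompact).subset ?_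
  rintro _ ⟨N, rfl⟩
  exact ⟨νs N, .inr ⟨N, rfl⟩, rfl⟩

theorem lintegral_le_of_tendsto {f : E → ℝ} (hf : Continuous f) (hf0 : 0 ≤ f)
    {ν : ProbabilityMeasure E} {νs : ℕ → ProbabilityMeasure E} (h : Tendsto νs atTop (𝓝 ν))
    {r : ℝ≥0∞} (hr : ∀ N, ∫⁻ x, ENNReal.ofReal (f x) ∂(νs N) ≤ r) :
    ∫⁻ x, ENNReal.ofReal (f x) ∂ν ≤ r :=
  (lintegral_le_liminf_lintegral_of_forall_isOpen_measure_le_liminf_measure hf hf0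
    fun _ hG => ProbabilityMeasure.le_liminf_measure_open_of_tendsto h hG).trans
    (liminf_le_of_frequently_le' (.of_forall hr))

theorem exists_isCoupling_subseq_tendsto {P Q : ProbabilityMeasure E}
    {Ps Qs : ℕ → ProbabilityMeasure E} (hP : Tendsto Ps atTop (𝓝 P)) (hQ : Tendsto Qs atTop (𝓝 Q))
    {πs : ℕ → ProbabilityMeasure (E × E)}
    (hπs : ∀ N, IsCoupling (πs N : Measure (E × E)) (Ps N) (Qs N)) :
    ∃ π : ProbabilityMeasure (E × E), IsCoupling (π : Measure (E × E)) P Q ∧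
      ∃ φ : ℕ → ℕ, StrictMono φ ∧ Tendsto (πs ∘ φ) atTop (𝓝 π) := by
  have htight : IsTightMeasureSet {((π : ProbabilityMeasure (E × E)) : Measure (E × E)) |
      π ∈ range πs} := by
    refine .prodMk ((isTightMeasureSet_range_of_tendsto hP).subset ?_)
      ((isTightMeasureSet_range_of_tendsto hQ).subset ?_)
    · rintro _ ⟨_, ⟨_, ⟨N, rfl⟩, rfl⟩, rfl⟩
      exact ⟨N, (hπs N).map_fst.symm⟩
    · rintro _ ⟨_, ⟨_, ⟨N, rfl⟩, rfl⟩, rfl⟩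
      exact ⟨N, (hπs N).map_snd.symm⟩
  obtain ⟨π, -, φ, hφ, hlim⟩ := (isCompact_closure_of_isTightMeasureSet htight).tendsto_subseq
    fun N => subset_closure (mem_range_self N)
  refine ⟨π, ⟨?_, ?_⟩, φ, hφ, hlim⟩
  · have hfst := ((ProbabilityMeasure.continuous_map continuous_fst).tendsto π).comp hlim
    refine congrArg ProbabilityMeasure.toMeasure (tendsto_nhds_unique hfst ?_)
    exact (hP.comp hφ.tendsto_atTop).congr fun N => Subtype.ext (hπs (φ N)).map_fst.symm
  · have hsnd := ((ProbabilityMeasure.continuous_map continuous_snd).tendsto π).comp hlim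
    refine congrArg ProbabilityMeasure.toMeasure (tendsto_nhds_unique hsnd ?_)
    exact (hQ.comp hφ.tendsto_atTop).congr fun N => Subtype.ext (hπs (φ N)).map_snd.symm

theorem lowerSemicontinuous_optTransportCost {c : E → E → ℝ}
    (hc : Continuous fun p : E × E => c p.1 p.2) (hc0 : ∀ x y, 0 ≤ c x y) :
    LowerSemicontinuous fun p : ProbabilityMeasure E × ProbabilityMeasure E =>
      optTransportCost c p.1 p.2 := by
  let := TopologicalSpace.upgradeIsCompletelyMetrizable E
  refine lowerSemicontinuous_iff_isClosed_preimage.2 fun r => IsSeqClosed.isClosed ?_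
  intro PQs PQ hPQs hlim
  refine ENNReal.le_of_forall_pos_le_add fun ε hε _ => ?_
  choose πs hπs hcost using fun N =>
    exists_isCoupling_lintegral_le c (PQs N).1 (PQs N).2 (ε := ε) (mod_cast hε.ne')
  obtain ⟨π, hπ, φ, -, hφ⟩ := exists_isCoupling_subseq_tendsto hlim.fst_nhds hlim.snd_nhds
    (πs := fun N => ⟨πs N, (hπs N).isProbabilityMeasure⟩) hπs
  refine hπ.optTransportCost_le.trans ?_
  exact lintegral_le_of_tendsto hc (fun p => hc0 p.1 p.2) hφ fun N =>
    (hcost (φ N)).trans (add_le_add_left (hPQs (φ N)) _)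

end LowerSemicontinuity

section Coarsening

theorem exists_measurable_dist_denseSeq_lt (Y : Type*) [PseudoMetricSpace Y]
    [TopologicalSpace.SeparableSpace Y] [Nonempty Y] [MeasurableSpace Y] [OpensMeasurableSpace Y]
    {ε : ℝ} (hε : 0 < ε) :
    ∃ g : Y → ℕ, Measurable g ∧ ∀ y, dist (TopologicalSpace.denseSeq Y (g y)) y < ε := by
  classical
  have hex (y : Y) : ∃ k, dist (TopologicalSpace.denseSeq Y k) y < ε := by
    simpa only [dist_comm] using (TopologicalSpace.denseRange_denseSeq Y).exists_dist_lt y hε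
  exact ⟨fun y => Nat.find (hex y),
    measurable_find hex fun k => (isOpen_lt (by fun_prop) continuous_const).measurableSet,
    fun y => Nat.find_spec (hex y)⟩

section

variable {E : Type*} [PseudoMetricSpace E] [MeasurableSpace E] [OpensMeasurableSpace E]

theorem measure_le_measure_thickening_of_map_eq {μ ν : Measure E} {ρ : E → E}
    (hρ : Measurable ρ) {ε : ℝ} (hdist : ∀ x, dist (ρ x) x < ε) (h : μ.map ρ = ν.map ρ)
    (B : Set E) : μ B ≤ ν (Metric.thickening (ε + ε) B) := by
  have hmeas : MeasurableSet (Metric.thickening ε B) := Metric.isOpen_thickening.measurableSet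
  calc μ B ≤ μ (ρ ⁻¹' Metric.thickening ε B) :=
        measure_mono fun x hx => Metric.mem_thickening_iff.2 ⟨x, hx, hdist x⟩
    _ = ν (ρ ⁻¹' Metric.thickening ε B) := by
        rw [← Measure.map_apply hρ hmeas, h, Measure.map_apply hρ hmeas]
    _ ≤ ν (Metric.thickening (ε + ε) B) := by
        refine measure_mono fun x hx => Metric.thickening_thickening_subset ε ε B ?_
        exact Metric.mem_thickening_iff.2 ⟨ρ x, hx, dist_comm x (ρ x) ▸ hdist x⟩

theorem tendsto_of_map_eq {ν : ProbabilityMeasure E} {νs : ℕ → ProbabilityMeasure E}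
    {ρ : ℕ → E → E} (hρ : ∀ N, Measurable (ρ N)) {δ : ℕ → ℝ} (hδ0 : ∀ N, 0 < δ N)
    (hδ : Tendsto δ atTop (𝓝 0)) (hdist : ∀ N x, dist (ρ N x) x < δ N)
    (h : ∀ N, (νs N : Measure E).map (ρ N) = (ν : Measure E).map (ρ N)) :
    Tendsto νs atTop (𝓝 ν) := by
  have hradius : Tendsto (fun N => δ N + δ N) atTop (𝓝[>] 0) :=
    tendsto_nhdsWithin_iff.2 ⟨by simpa using hδ.add hδ,
      .of_forall fun N => add_pos (hδ0 N) (hδ0 N)⟩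
  refine tendsto_of_forall_isClosed_limsup_le' fun F hF => ?_
  have hthick := (tendsto_measure_thickening_of_isClosed (μ := (ν : Measure E))
    ⟨1, one_pos, measure_ne_top _ _⟩ hF).comp hradius
  exact (limsup_le_limsup (.of_forall fun N =>
    measure_le_measure_thickening_of_map_eq (hρ N) (hdist N) (h N) F)).trans_eq hthick.limsup_eq

end

variable {Y Z S : Type*} [MeasurableSpace Y] [MeasurableSpace Z] [StandardBorelSpace Z]
  [Nonempty Z] [MeasurableSpace S] {ζ : Measure (Y × Z)} [IsFiniteMeasure ζ] {g : Y → S}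

theorem fst_map_compProd_condKernel (hg : Measurable g) :
    ζ.fst.map g ⊗ₘ (ζ.map (Prod.map g id)).condKernel = ζ.map (Prod.map g id) := by
  have hfst : (ζ.map (Prod.map g (id : Z → Z))).fst = ζ.fst.map g := by
    rw [Measure.fst, Measure.fst, Measure.map_map measurable_fst (hg.prodMap measurable_id),
      Measure.map_map hg measurable_fst]
    rfl
  rw [← hfst, Measure.disintegrate]

/-- The measure on `Y × Z` with the first marginal of `ζ` whose conditional law given `y` is the
conditional law under `ζ` of the second coordinate given only the value `g y` of the label `g`. -/
def coarsening (ζ : Measure (Y × Z)) [IsFiniteMeasure ζ] {g : Y → S} (hg : Measurable g) :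
    Measure (Y × Z) :=
  ζ.fst ⊗ₘ (ζ.map (Prod.map g id)).condKernel.comap g hg

theorem map_coarsening (hg : Measurable g) :
    (coarsening ζ hg).map (Prod.map g id) = ζ.map (Prod.map g id) := by
  refine (map_prodMap_compProd hg measurable_id fun y => ?_).trans (fst_map_compProd_condKernel hg)
  rw [Measure.map_id, Kernel.comap_apply]

instance isProbabilityMeasure_coarsening {ζ : Measure (Y × Z)} [IsProbabilityMeasure ζ]
    (hg : Measurable g) : IsProbabilityMeasure (coarsening ζ hg) :=
  inferInstanceAs (IsProbabilityMeasure (ζ.fst ⊗ₘ _))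

end Coarsening

theorem exists_tendsto_coarsening {Y Z : Type*} [TopologicalSpace Y] [PolishSpace Y]
    [MeasurableSpace Y] [BorelSpace Y] [TopologicalSpace Z] [PolishSpace Z] [MeasurableSpace Z]
    [BorelSpace Z] [Nonempty Z] (ζ : ProbabilityMeasure (Y × Z)) :
    ∃ (g : ℕ → Y → ℕ) (hg : ∀ N, Measurable (g N)),
      Tendsto (β := ProbabilityMeasure (Y × Z))
        (fun N => ⟨coarsening ζ (hg N), inferInstance⟩) atTop (𝓝 ζ) := by
  have : Nonempty Y := (nonempty_of_isProbabilityMeasure (ζ : Measure (Y × Z))).map Prod.fst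
  let := TopologicalSpace.upgradeIsCompletelyMetrizable Y
  let := TopologicalSpace.upgradeIsCompletelyMetrizable Z
  choose g hg hdist using fun N : ℕ =>
    exists_measurable_dist_denseSeq_lt Y (Nat.one_div_pos_of_nat (α := ℝ) (n := N))
  have hdecode : Measurable (Prod.map (TopologicalSpace.denseSeq Y) (id : Z → Z)) :=
    (measurable_of_countable _).prodMap measurable_id
  have hencode (N : ℕ) : Measurable (Prod.map (g N) (id : Z → Z)) := (hg N).prodMap measurable_id
  refine ⟨g, hg, tendsto_of_map_eq (fun N => hdecode.comp (hencode N))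
    (fun N => Nat.one_div_pos_of_nat) tendsto_one_div_add_atTop_nhds_zero_nat ?_ fun N => ?_⟩
  · intro N p
    simpa [Prod.dist_eq] using hdist N p.1
  · rw [← Measure.map_map hdecode (hencode N), ← Measure.map_map hdecode (hencode N)]
    exact congrArg _ (map_coarsening (hg N))

/-- The transportation cost inequality `α(T_c(μ, ν)) ≤ H(ν|μ)` for all probability measures `ν`. -/
def TransportCostInequality {E : Type*} [MeasurableSpace E] (α : ℝ≥0∞ → ℝ≥0∞) (c : E → E → ℝ)
    (μ : Measure E) : Prop :=
  ∀ ν : Measure E, IsProbabilityMeasure ν → α (optTransportCost c μ ν) ≤ relEntropy ν μ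

namespace TransportCostInequality

variable {α β γ : ℝ≥0∞ → ℝ≥0∞}

theorem le_klDiv {E : Type*} [MeasurableSpace E] {c : E → E → ℝ} {μ ν : Measure E}
    [IsProbabilityMeasure μ] [IsProbabilityMeasure ν] (h : TransportCostInequality α c μ) :
    α (optTransportCost c μ ν) ≤ klDiv ν μ :=
  (h ν inferInstance).trans_eq (relEntropy_eq_klDiv (by simp only [measure_univ]))

theorem comp_measurableEquiv {E F : Type*} [MeasurableSpace E] [MeasurableSpace F]
    {c : F → F → ℝ} {μ : Measure E} [IsProbabilityMeasure μ] (hα : Monotone α) (e : E ≃ᵐ F)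
    (h : TransportCostInequality α c (μ.map e)) :
    TransportCostInequality α (fun x y => c (e x) (e y)) μ := by
  intro ν hν
  have (m : Measure E) [IsProbabilityMeasure m] : IsProbabilityMeasure (m.map e) :=
    Measure.isProbabilityMeasure_map e.measurable.aemeasurable
  calc α (optTransportCost (fun x y => c (e x) (e y)) μ ν)
      ≤ α (optTransportCost c (μ.map e) (ν.map e)) := hα (optTransportCost_comp_le c e μ ν)
    _ ≤ klDiv (ν.map e) (μ.map e) := h.le_klDiv
    _ ≤ klDiv ν μ := klDiv_map_le ν μ e.measurable
    _ = relEntropy ν μ := (relEntropy_eq_klDiv (by simp only [measure_univ])).symm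

section Prod

variable {Y Z : Type*} [MeasurableSpace Y] [MeasurableSpace Z] {cY : Y → Y → ℝ} {cZ : Z → Z → ℝ}
  {P : Measure Y} {Q : Measure Z} [IsProbabilityMeasure P] [IsProbabilityMeasure Q]

theorem map_optTransportCost_coarsening_le [StandardBorelSpace Z] [Nonempty Z] {S : Type*}
    [MeasurableSpace S] [Countable S] [MeasurableSingletonClass S]
    (hcY : Measurable fun p : Y × Y => cY p.1 p.2) (hcZ : Measurable fun p : Z × Z => cZ p.1 p.2)
    (hP : TransportCostInequality α cY P) (hQ : TransportCostInequality β cZ Q)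
    (hβ : ClassCFun β) (hγ : Monotone γ) (hγαβ : ∀ s t, γ (s + t) ≤ α s + β t)
    (ζ : Measure (Y × Z)) [IsProbabilityMeasure ζ] {g : Y → S} (hg : Measurable g) :
    γ (optTransportCost (fun p q : Y × Z => cY p.1 q.1 + cZ p.2 q.2) (P.prod Q)
      (coarsening ζ hg)) ≤ klDiv ζ (P.prod Q) := by
  have hm : ζ.fst.map g univ ≤ 1 := by simp [Measure.map_apply hg]
  set κ := (ζ.map (Prod.map g id)).condKernel
  calc γ (optTransportCost (fun p q : Y × Z => cY p.1 q.1 + cZ p.2 q.2) (P.prod Q)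
        (coarsening ζ hg))
      ≤ γ (optTransportCost cY P ζ.fst + ∫⁻ s, optTransportCost cZ Q (κ s) ∂(ζ.fst.map g)) :=
        hγ (optTransportCost_compProd_comap_le hcY hcZ P ζ.fst Q hg κ)
    _ ≤ α (optTransportCost cY P ζ.fst) +
          β (∫⁻ s, optTransportCost cZ Q (κ s) ∂(ζ.fst.map g)) := hγαβ _ _
    _ ≤ α (optTransportCost cY P ζ.fst) +
          ∫⁻ s, β (optTransportCost cZ Q (κ s)) ∂(ζ.fst.map g) := by
        grw [hβ.map_lintegral_le hm]
    _ ≤ klDiv ζ.fst P + ∫⁻ s, klDiv (κ s) Q ∂(ζ.fst.map g) :=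
        add_le_add hP.le_klDiv (lintegral_mono fun s => hQ.le_klDiv)
    _ ≤ klDiv ζ (P.prod Q) :=
        klDiv_fst_add_lintegral_klDiv_le P Q hg (fst_map_compProd_condKernel hg)

end Prod

-- `hγαβ` says that `γ` is at most the infimal convolution of `α` and `β`.
theorem prod {Y Z : Type*} [TopologicalSpace Y] [PolishSpace Y] [MeasurableSpace Y] [BorelSpace Y]
    [TopologicalSpace Z] [PolishSpace Z] [MeasurableSpace Z] [BorelSpace Z]
    {cY : Y → Y → ℝ} {cZ : Z → Z → ℝ}
    (hcY : Continuous fun p : Y × Y => cY p.1 p.2) (hcZ : Continuous fun p : Z × Z => cZ p.1 p.2)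
    (hcY0 : ∀ x y, 0 ≤ cY x y) (hcZ0 : ∀ x y, 0 ≤ cZ x y)
    {P : Measure Y} {Q : Measure Z} [IsProbabilityMeasure P] [IsProbabilityMeasure Q]
    (hP : TransportCostInequality α cY P) (hQ : TransportCostInequality β cZ Q)
    (hβ : ClassCFun β) (hγ : ClassCFun γ) (hγαβ : ∀ s t, γ (s + t) ≤ α s + β t) :
    TransportCostInequality γ (fun p q : Y × Z => cY p.1 q.1 + cZ p.2 q.2) (P.prod Q) := by
  intro ζ hζ
  have : Nonempty Z := nonempty_of_isProbabilityMeasure Q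
  obtain ⟨g, hg, hlim⟩ := exists_tendsto_coarsening (⟨ζ, hζ⟩ : ProbabilityMeasure (Y × Z))
  have hlsc : LowerSemicontinuous fun ν : ProbabilityMeasure (Y × Z) =>
      γ (optTransportCost (fun p q => cY p.1 q.1 + cZ p.2 q.2) (P.prod Q) ν) := by
    have hcost := lowerSemicontinuous_optTransportCost
      (c := fun p q : Y × Z => cY p.1 q.1 + cZ p.2 q.2) (by fun_prop)
      fun p q => add_nonneg (hcY0 _ _) (hcZ0 _ _)
    exact hγ.comp_lowerSemicontinuous (hcost.comp (g :=
      fun ν => ((⟨P.prod Q, inferInstance⟩, ν) : ProbabilityMeasure (Y × Z) × _)) (by fun_prop))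
  rw [relEntropy_eq_klDiv (by simp only [measure_univ])]
  exact (hlsc.isClosed_preimage _).mem_of_tendsto hlim (.of_forall fun N =>
    map_optTransportCost_coarsening_le hcY.measurable hcZ.measurable hP hQ hβ hγ.monotone hγαβ
      ζ (hg N))

end TransportCostInequality

theorem tensorization_TCI_power_general {n : ℕ} (hn : 1 ≤ n) {X : Fin n → Type*}
    [∀ i, TopologicalSpace (X i)] [∀ i, PolishSpace (X i)] [∀ i, MeasurableSpace (X i)]
    [∀ i, BorelSpace (X i)] (μ : ∀ i, Measure (X i)) [∀ i, IsProbabilityMeasure (μ i)]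
    (c : ∀ i, X i → X i → ℝ) (hc : ∀ i, Continuous fun p : X i × X i => c i p.1 p.2)
    (hc0 : ∀ i x y, 0 ≤ c i x y) {α : ℝ≥0∞ → ℝ≥0∞} (hα : ClassCFun α)
    (hTCI : ∀ i, TransportCostInequality α (c i) (μ i)) :
    TransportCostInequality (perspective α n) (fun x y => ∑ i, c i (x i) (y i))
      (Measure.pi μ) := by
  induction n, hn using Nat.le_induction with
  | base =>
    have hmap := (measurePreserving_piUnique μ).map_eq
    simpa [perspective_one] using
      (hmap ▸ hTCI default).comp_measurableEquiv hα.monotone (MeasurableEquiv.piUnique X)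
  | succ n hn ih =>
    have hn0 : (n : ℝ≥0∞) ≠ 0 := mod_cast Nat.one_le_iff_ne_zero.1 hn
    have hsucc : ClassCFun (perspective α (n + 1 : ℕ)) :=
      hα.perspective (mod_cast n.succ_ne_zero) (natCast_ne_top _)
    have htail := ih (fun i => μ i.succ) (fun i => c i.succ) (fun i => hc i.succ)
      (fun i => hc0 i.succ) fun i => hTCI i.succ
    have hprod := (hTCI 0).prod (hc 0) (by fun_prop) (hc0 0)
      (fun x y => Finset.sum_nonneg fun i _ => hc0 i.succ _ _) htail
      (hα.perspective hn0 (natCast_ne_top n)) hsucc fun s t => by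
        simpa [perspective_one, add_comm] using
          hα.perspective_add_le one_ne_zero one_ne_top hn0 (natCast_ne_top n) s t
    have hmap := (measurePreserving_piFinSuccAbove μ 0).map_eq
    simp only [Fin.sum_univ_succ]
    exact (hmap ▸ hprod).comp_measurableEquiv hsucc.monotone (MeasurableEquiv.piFinSuccAbove X 0)

/-- Tensorization of a convex TCI on the `n`-fold product space:
`n α(𝒯_{c^{⊕n}}(μ^{⊗n}, ζ)/n) ≤ H(ζ|μ^{⊗n})`. -/
theorem tensorization_TCI_power
    {X : Type*} [TopologicalSpace X] [PolishSpace X] [MeasurableSpace X] [BorelSpace X]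
    (μ : Measure X) [IsProbabilityMeasure μ]
    (c : X → X → ℝ)
    (hc : Continuous fun p : X × X => c p.1 p.2)
    (hc0 : ∀ x y, 0 ≤ c x y)
    (hcdiag : ∀ x, c x x = 0)
    (α : ℝ≥0∞ → ℝ≥0∞) (hα : ClassCFun α)
    (hTCI : ∀ ν : Measure X, IsProbabilityMeasure ν →
      α (optTransportCost c μ ν) ≤ relEntropy ν μ)
    (n : ℕ) (hn : 1 ≤ n) :
    ∀ ζ : Measure (Fin n → X), IsProbabilityMeasure ζ →
      (n : ℝ≥0∞) *
          α (optTransportCost (fun x y => ∑ i, c (x i) (y i))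
              (Measure.pi fun _ => μ) ζ / (n : ℝ≥0∞)) ≤
        relEntropy ζ (Measure.pi fun _ => μ) :=
  tensorization_TCI_power_general hn (fun _ => μ) (fun _ => c) (fun _ => hc) (fun _ => hc0) hα
    fun _ => hTCI

end
end

section
/- Let (X,d) be a Polish metric space, μ a Borel probability measure on X, and α a function in the class C. Say that the transportation cost inequality α(T_d(μ,ν)) ≤ H(ν|μ) (for all Borel probability measures ν on X) has the dimension-free tensorization property if for every n ≥ 1 and every Borel probability measure ζ on X^n one has α(T_{d^{⊕n}}(μ^{⊗n}, ζ)) ≤ H(ζ|μ^{⊗n}), where d^{⊕n}((x_1,…,x_n),(y_1,…,y_n)) = d(x_1,y_1) + ⋯ + d(x_n,y_n). Then this inequality holds and has the dimension-free tensorization property if and only if α is identically zero or μ is a Dirac mass. -/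
open MeasureTheory ENNReal Set
open scoped NNReal ENNReal

noncomputable section

/-!
If `μ` is not a Dirac mass, some `1`-Lipschitz `f : X → [0, 1]` has positive variance `V`. Perturb
`μ` to `ν = (1 + ε (f - ∫ f ∂μ)) μ`. Testing against `∑ i, f (x i)` shows that the transport cost
from `μ^n` to `ν^n` is at least `n ε V`, while the relative entropy of `ν^n` is at most its `χ²`
divergence `(1 + ε² V) ^ n - 1`. With `n = N²` and `ε = 1 / N` the cost grows at least like `N V`
while the entropy stays below `exp V`, so `α` is bounded on finite arguments; a bounded convex
function vanishing at `0` is zero.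
-/

section StarShaped

/-- Functions that are star-shaped at `0`: convexity on segments issuing from `0`, together with
`α 0 = 0` (the case `p = 0`). -/
def IsStarShaped (α : ℝ≥0∞ → ℝ≥0∞) : Prop :=
  ∀ (p : ℝ≥0) (s : ℝ≥0∞), p ≤ 1 → α (p * s) ≤ p * α s

variable {α : ℝ≥0∞ → ℝ≥0∞}

lemma ClassCFun.isStarShaped (hα : ClassCFun α) : IsStarShaped α := by
  intro p s hp
  simpa [hα.2.1] using hα.2.2.1 s 0 p (1 - p) (add_tsub_cancel_of_le hp)

namespace IsStarShaped

lemma map_zero (hα : IsStarShaped α) : α 0 = 0 := by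
  simpa using hα 0 0 zero_le_one

lemma monotone (hα : IsStarShaped α) (htop : α ⊤ = ⨆ y ∈ Iio ⊤, α y) : Monotone α := by
  intro s t hst
  rcases hst.eq_or_lt with rfl | hlt
  · rfl
  rcases eq_or_ne t ⊤ with rfl | ht
  · exact htop ▸ le_iSup₂ (f := fun y (_ : y ∈ Iio ⊤) => α y) s hlt
  lift t to ℝ≥0 using ht
  lift s to ℝ≥0 using hlt.ne_top
  have ht : t ≠ 0 := (pos_of_gt (ENNReal.coe_lt_coe.1 hlt)).ne'
  have hp : s / t ≤ 1 := div_le_one_of_le₀ (ENNReal.coe_le_coe.1 hst) zero_le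
  calc α s = α ((s / t : ℝ≥0) * t) := by rw [← ENNReal.coe_mul, div_mul_cancel₀ s ht]
    _ ≤ (s / t : ℝ≥0) * α t := hα _ _ hp
    _ ≤ α t := mul_le_of_le_one_left' (ENNReal.coe_le_one_iff.2 hp)

lemma eq_zero_of_bounded (hα : IsStarShaped α) {C : ℝ≥0∞} (hC : C ≠ ⊤)
    (hbdd : ∀ t ≠ ⊤, α t ≤ C) {t : ℝ≥0∞} (ht : t ≠ ⊤) : α t = 0 := by
  by_contra hne
  obtain ⟨n, hn⟩ := ENNReal.exists_nat_mul_gt hne hC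
  have hn0 : n ≠ 0 := by rintro rfl; simp at hn
  have hinv : ((n : ℝ≥0)⁻¹ : ℝ≥0) = (n : ℝ≥0∞)⁻¹ := by
    rw [ENNReal.coe_inv (by exact_mod_cast hn0), ENNReal.coe_natCast]
  have hscale : α t ≤ (n : ℝ≥0∞)⁻¹ * C := calc
    α t = α ((n : ℝ≥0∞)⁻¹ * (n * t)) := by
      rw [ENNReal.inv_mul_cancel_left' (by simp [hn0]) (by simp)]
    _ ≤ (n : ℝ≥0∞)⁻¹ * α (n * t) := by
      rw [← hinv]
      exact hα _ _ (inv_le_one_of_one_le₀ (by exact_mod_cast Nat.one_le_iff_ne_zero.2 hn0))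
    _ ≤ (n : ℝ≥0∞)⁻¹ * C := by gcongr; exact hbdd _ (by finiteness)
  refine hn.not_ge ?_
  calc n * α t ≤ n * ((n : ℝ≥0∞)⁻¹ * C) := by gcongr
    _ = C := ENNReal.mul_inv_cancel_left' (by simp [hn0]) (by simp)

end IsStarShaped

end StarShaped

section Dirac

variable {Y : Type*} [MeasurableSpace Y]

lemma eq_dirac_of_ae_eq {ν : Measure Y} [IsProbabilityMeasure ν] {y : Y}
    (h : ∀ᵐ x ∂ν, x = y) : ν = Measure.dirac y :=
  calc ν = ν.map id := Measure.map_id.symm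
    _ = ν.map (fun _ => y) := Measure.map_congr h
    _ = Measure.dirac y := by simp

lemma pi_dirac {ι : Type*} [Fintype ι] {X : ι → Type*} [∀ i, MeasurableSpace (X i)]
    [∀ i, MeasurableSingletonClass (X i)] (x : ∀ i, X i) :
    Measure.pi (fun i => Measure.dirac (x i)) = Measure.dirac x := by
  refine eq_dirac_of_ae_eq (Measure.ae_eq_pi (f := fun _ => id) (f' := fun i _ => x i) fun i => ?_)
  exact (ae_dirac_iff (measurableSet_singleton _)).2 rfl

lemma optTransportCost_dirac_self {c : Y → Y → ℝ} {y : Y} (hc : c y y = 0)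
    [MeasurableSingletonClass Y] :
    optTransportCost c (Measure.dirac y) (Measure.dirac y) = 0 := by
  refine nonpos_iff_eq_zero.1 ((iInf₂_le (Measure.dirac (y, y)) ⟨?_, ?_⟩).trans ?_)
  · simp [hc]
  · rw [Measure.map_dirac' measurable_fst]
  · rw [Measure.map_dirac' measurable_snd]

lemma transport_inequality_dirac [MeasurableSingletonClass Y] {c : Y → Y → ℝ} {y : Y}
    (hc : c y y = 0) {α : ℝ≥0∞ → ℝ≥0∞} (hα : α 0 = 0) (ν : Measure Y) [IsProbabilityMeasure ν] :
    α (optTransportCost c (Measure.dirac y) ν) ≤ relEntropy ν (Measure.dirac y) := by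
  by_cases hac : ν ≪ Measure.dirac y
  · have hν : ν = Measure.dirac y :=
      eq_dirac_of_ae_eq (hac.ae_le ((ae_dirac_iff (measurableSet_singleton y)).2 rfl))
    rw [hν, optTransportCost_dirac_self hc, hα]
    exact zero_le
  · simp [relEntropy, hac]

end Dirac

section RelativeEntropy

open InformationTheory ProbabilityTheory

lemma klFun_le_sub_one_sq {x : ℝ} (hx : 0 ≤ x) : klFun x ≤ (x - 1) ^ 2 := by
  rcases hx.eq_or_lt with rfl | hpos
  · simp [klFun_zero]
  · rw [klFun_apply]
    nlinarith [Real.log_le_sub_one_of_pos hpos]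

variable {Y : Type*} [MeasurableSpace Y]

lemma relEntropy_eq_klDiv_s10 (ν μ : Measure Y) [IsProbabilityMeasure ν] [IsProbabilityMeasure μ] :
    relEntropy ν μ = klDiv ν μ := by
  rw [relEntropy, ← llr_def]
  split_ifs with h
  · rw [klDiv_of_ac_of_integrable h.1 h.2]
    simp
  · exact (klDiv_eq_top_iff.2 fun hac hint => h ⟨hac, hint⟩).symm

lemma isProbabilityMeasure_withDensity_ofReal {μ : Measure Y} {u : Y → ℝ} (hu : Integrable u μ)
    (hu_nonneg : 0 ≤ᵐ[μ] u) (hu_one : ∫ x, u x ∂μ = 1) :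
    IsProbabilityMeasure (μ.withDensity fun x => ENNReal.ofReal (u x)) := by
  constructor
  rw [withDensity_apply _ .univ, Measure.restrict_univ,
    ← ofReal_integral_eq_lintegral_ofReal hu hu_nonneg, hu_one, ENNReal.ofReal_one]

/-- For a probability density `u`, the variance of `u` is the `χ²` divergence. -/
lemma relEntropy_withDensity_le {μ : Measure Y} [IsProbabilityMeasure μ] {u : Y → ℝ}
    (hu : MemLp u 2 μ) (hu_nonneg : ∀ x, 0 ≤ u x) (hu_one : ∫ x, u x ∂μ = 1) :
    relEntropy (μ.withDensity fun x => ENNReal.ofReal (u x)) μ ≤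
      ENNReal.ofReal Var[u; μ] := by
  have hint : Integrable u μ := hu.integrable one_le_two
  have := isProbabilityMeasure_withDensity_ofReal hint (ae_of_all _ hu_nonneg) hu_one
  have hsq : Integrable (fun x => (u x - 1) ^ 2) μ := (hu.sub (memLp_const 1)).integrable_sq
  rw [relEntropy_eq_klDiv_s10, klDiv_eq_lintegral_klFun_of_ac (withDensity_absolutelyContinuous _ _),
    variance_eq_integral hu.aemeasurable, hu_one,
    ofReal_integral_eq_lintegral_ofReal hsq (ae_of_all _ fun x => sq_nonneg _)]
  refine lintegral_mono_ae ?_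
  filter_upwards [Measure.rnDeriv_withDensity₀ μ hint.aemeasurable.ennreal_ofReal] with x hx
  rw [hx, ENNReal.toReal_ofReal (hu_nonneg x)]
  exact ENNReal.ofReal_le_ofReal (klFun_le_sub_one_sq (hu_nonneg x))

variable {ι : Type*} [Fintype ι] {X : ι → Type*} [∀ i, MeasurableSpace (X i)]
  {μ : ∀ i, Measure (X i)} {u : ∀ i, X i → ℝ}

lemma pi_withDensity_ofReal [∀ i, SigmaFinite (μ i)] (hu : ∀ i, Integrable (u i) (μ i))
    (hu_nonneg : ∀ i x, 0 ≤ u i x) :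
    Measure.pi (fun i => (μ i).withDensity fun x => ENNReal.ofReal (u i x)) =
      (Measure.pi μ).withDensity fun x => ENNReal.ofReal (∏ i, u i (x i)) := by
  have (i : ι) : IsFiniteMeasure ((μ i).withDensity fun x => ENNReal.ofReal (u i x)) :=
    isFiniteMeasure_withDensity_ofReal (hu i).2
  refine Measure.pi_eq fun s hs => ?_
  calc ((Measure.pi μ).withDensity fun x => ENNReal.ofReal (∏ i, u i (x i))) (univ.pi s)
      = ENNReal.ofReal (∫ x, ∏ i, u i (x i) ∂Measure.pi fun i => (μ i).restrict (s i)) := by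
        rw [withDensity_apply _ (MeasurableSet.univ_pi hs), Measure.restrict_pi_pi,
          ofReal_integral_eq_lintegral_ofReal (.fintype_prod_dep fun i => (hu i).integrableOn)
            (ae_of_all _ fun x => Finset.prod_nonneg fun i _ => hu_nonneg i (x i))]
    _ = ∏ i, ENNReal.ofReal (∫ x in s i, u i x ∂μ i) := by
        rw [integral_fintype_prod_eq_prod,
          ENNReal.ofReal_prod_of_nonneg fun i _ => integral_nonneg (hu_nonneg i)]
    _ = ∏ i, ((μ i).withDensity fun x => ENNReal.ofReal (u i x)) (s i) := by
        refine Finset.prod_congr rfl fun i _ => ?_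
        rw [withDensity_apply _ (hs i), ofReal_integral_eq_lintegral_ofReal (hu i).integrableOn
          (ae_of_all _ (hu_nonneg i))]

lemma relEntropy_pi_withDensity_le [∀ i, IsProbabilityMeasure (μ i)]
    (hu : ∀ i, MemLp (u i) 2 (μ i)) (hu_nonneg : ∀ i x, 0 ≤ u i x)
    (hu_one : ∀ i, ∫ x, u i x ∂μ i = 1) :
    relEntropy (Measure.pi fun i => (μ i).withDensity fun x => ENNReal.ofReal (u i x))
      (Measure.pi μ) ≤ ENNReal.ofReal (∏ i, ∫ x, u i x ^ 2 ∂μ i - 1) := by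
  have hint (i : ι) : Integrable (u i) (μ i) := (hu i).integrable one_le_two
  have hprod : Integrable (fun x : ∀ i, X i => ∏ i, u i (x i)) (Measure.pi μ) :=
    .fintype_prod_dep hint
  have hprod_sq : Integrable (fun x : ∀ i, X i => (∏ i, u i (x i)) ^ 2) (Measure.pi μ) := by
    simp_rw [← Finset.prod_pow]
    exact .fintype_prod_dep fun i => (hu i).integrable_sq
  rw [pi_withDensity_ofReal hint hu_nonneg]
  have hmem : MemLp (fun x : ∀ i, X i => ∏ i, u i (x i)) 2 (Measure.pi μ) :=
    (memLp_two_iff_integrable_sq hprod.aestronglyMeasurable).2 hprod_sq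
  have hone : ∫ x, ∏ i, u i (x i) ∂Measure.pi μ = 1 := by
    rw [integral_fintype_prod_eq_prod]
    simp [hu_one]
  have hvar : Var[fun x => ∏ i, u i (x i); Measure.pi μ] = ∏ i, ∫ x, u i x ^ 2 ∂μ i - 1 := by
    rw [variance_eq_sub hmem, hone, ← integral_fintype_prod_eq_prod fun i x => u i x ^ 2]
    simp [Finset.prod_pow]
  rw [← hvar]
  exact relEntropy_withDensity_le hmem
    (fun x => Finset.prod_nonneg fun i _ => hu_nonneg i (x i)) hone

end RelativeEntropy

section TransportCost

lemma ofReal_integral_le_lintegral_ofReal {Y : Type*} [MeasurableSpace Y] {π : Measure Y}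
    {g : Y → ℝ} (hg : Integrable g π) :
    ENNReal.ofReal (∫ y, g y ∂π) ≤ ∫⁻ y, ENNReal.ofReal (g y) ∂π := by
  rw [integral_eq_lintegral_pos_part_sub_lintegral_neg_part hg]
  exact (ENNReal.ofReal_le_ofReal (sub_le_self _ ENNReal.toReal_nonneg)).trans
    ENNReal.ofReal_toReal_le

/-- The easy half of Kantorovich duality. -/
lemma ofReal_integral_sub_le_optTransportCost {Y : Type*} [MeasurableSpace Y] {c : Y → Y → ℝ}
    {μ ν : Measure Y} {F : Y → ℝ} (hμ : Integrable F μ) (hν : Integrable F ν)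
    (hF : ∀ x y, F y - F x ≤ c x y) :
    ENNReal.ofReal (∫ x, F x ∂ν - ∫ x, F x ∂μ) ≤ optTransportCost c μ ν := by
  refine le_iInf₂ fun π ⟨hfst, hsnd⟩ => ?_
  subst hfst hsnd
  have hint_fst : Integrable (fun p => F p.1) π := hμ.comp_measurable measurable_fst
  have hint_snd : Integrable (fun p => F p.2) π := hν.comp_measurable measurable_snd
  rw [integral_map measurable_snd.aemeasurable hν.aestronglyMeasurable,
    integral_map measurable_fst.aemeasurable hμ.aestronglyMeasurable,
    ← integral_sub hint_snd hint_fst]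
  exact (ofReal_integral_le_lintegral_ofReal (hint_snd.sub hint_fst)).trans
    (lintegral_mono fun p => ENNReal.ofReal_le_ofReal (hF p.1 p.2))

variable {ι : Type*} [Fintype ι] {X : ι → Type*} [∀ i, MeasurableSpace (X i)]

lemma integral_pi_sum {μ : ∀ i, Measure (X i)} [∀ i, IsProbabilityMeasure (μ i)]
    {f : ∀ i, X i → ℝ} (hf : ∀ i, Integrable (f i) (μ i)) :
    ∫ x, ∑ i, f i (x i) ∂Measure.pi μ = ∑ i, ∫ x, f i x ∂μ i := by
  rw [integral_finsetSum _ fun i _ => integrable_comp_eval (hf i)]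
  exact Finset.sum_congr rfl fun i _ => integral_comp_eval (hf i).aestronglyMeasurable

lemma ofReal_sum_integral_sub_le_optTransportCost_pi {c : ∀ i, X i → X i → ℝ}
    {μ ν : ∀ i, Measure (X i)} [∀ i, IsProbabilityMeasure (μ i)]
    [∀ i, IsProbabilityMeasure (ν i)] {f : ∀ i, X i → ℝ} (hμ : ∀ i, Integrable (f i) (μ i))
    (hν : ∀ i, Integrable (f i) (ν i)) (hf : ∀ i x y, f i y - f i x ≤ c i x y) :
    ENNReal.ofReal (∑ i, (∫ x, f i x ∂ν i - ∫ x, f i x ∂μ i)) ≤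
      optTransportCost (fun x y => ∑ i, c i (x i) (y i)) (Measure.pi μ) (Measure.pi ν) := by
  rw [Finset.sum_sub_distrib, ← integral_pi_sum hμ, ← integral_pi_sum hν]
  refine ofReal_integral_sub_le_optTransportCost
    (integrable_finsetSum _ fun i _ => integrable_comp_eval (hμ i))
    (integrable_finsetSum _ fun i _ => integrable_comp_eval (hν i)) fun x y => ?_
  rw [← Finset.sum_sub_distrib]
  exact Finset.sum_le_sum fun i _ => hf i (x i) (y i)

end TransportCost

section LinearTilt

open ProbabilityTheory

variable {Y : Type*} [MeasurableSpace Y] {μ : Measure Y} {f : Y → ℝ} {ε : ℝ}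

/-- The density of the first-order perturbation of `μ` in the direction of the centered
function `f - ∫ f ∂μ`. -/
def tiltDensity (μ : Measure Y) (f : Y → ℝ) (ε : ℝ) (x : Y) : ℝ :=
  1 + ε * (f x - ∫ y, f y ∂μ)

/-- The perturbation of `μ` with density `tiltDensity μ f ε`, whose negative part is
truncated; it is a probability measure when the density is nonnegative. -/
def linearTilt (μ : Measure Y) (f : Y → ℝ) (ε : ℝ) : Measure Y :=
  μ.withDensity fun x => ENNReal.ofReal (tiltDensity μ f ε x)

variable [IsProbabilityMeasure μ]

lemma memLp_tiltDensity (hf : MemLp f 2 μ) : MemLp (tiltDensity μ f ε) 2 μ := by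
  have hcent : MemLp (fun x => ε * (f x - ∫ y, f y ∂μ)) 2 μ :=
    (hf.sub (memLp_const _)).const_mul ε
  exact (memLp_const (1 : ℝ)).add hcent

lemma integral_tiltDensity (hf : Integrable f μ) : ∫ x, tiltDensity μ f ε x ∂μ = 1 := by
  have hcent : Integrable (fun x => f x - ∫ y, f y ∂μ) μ := hf.sub (integrable_const _)
  simp only [tiltDensity]
  rw [integral_add (integrable_const 1) (hcent.const_mul ε), integral_const_mul,
    integral_sub hf (integrable_const _)]
  simp

lemma variance_tiltDensity (hf : AEStronglyMeasurable f μ) :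
    Var[tiltDensity μ f ε; μ] = ε ^ 2 * Var[f; μ] := by
  have hcent : AEStronglyMeasurable (fun x => f x - ∫ y, f y ∂μ) μ :=
    hf.sub aestronglyMeasurable_const
  unfold tiltDensity
  rw [variance_const_add (hcent.const_mul ε), variance_const_mul, variance_sub_const hf]

lemma integral_tiltDensity_sq (hf : MemLp f 2 μ) :
    ∫ x, tiltDensity μ f ε x ^ 2 ∂μ = 1 + ε ^ 2 * Var[f; μ] := by
  have hvar := variance_eq_sub (memLp_tiltDensity (ε := ε) hf)
  rw [variance_tiltDensity hf.aestronglyMeasurable,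
    integral_tiltDensity (hf.integrable one_le_two)] at hvar
  simp only [Pi.pow_apply] at hvar
  linarith

lemma isProbabilityMeasure_linearTilt (hf : MemLp f 2 μ) (hε : ∀ x, 0 ≤ tiltDensity μ f ε x) :
    IsProbabilityMeasure (linearTilt μ f ε) :=
  isProbabilityMeasure_withDensity_ofReal ((memLp_tiltDensity hf).integrable one_le_two)
    (ae_of_all _ hε) (integral_tiltDensity (hf.integrable one_le_two))

lemma integrable_linearTilt (hf : MemLp f 2 μ) (hε : ∀ x, 0 ≤ tiltDensity μ f ε x) :
    Integrable f (linearTilt μ f ε) := by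
  have hu : MemLp (tiltDensity μ f ε) 2 μ := memLp_tiltDensity hf
  rw [linearTilt, integrable_withDensity_iff_integrable_smul₀'
    hu.aemeasurable.ennreal_ofReal (by simp)]
  simp only [ENNReal.toReal_ofReal (hε _), smul_eq_mul]
  exact hu.integrable_mul hf

lemma integral_linearTilt (hf : MemLp f 2 μ) (hε : ∀ x, 0 ≤ tiltDensity μ f ε x) :
    ∫ x, f x ∂linearTilt μ f ε = ∫ x, f x ∂μ + ε * Var[f; μ] := by
  have hu : MemLp (tiltDensity μ f ε) 2 μ := memLp_tiltDensity hf
  have hint : Integrable f μ := hf.integrable one_le_two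
  have hexpand (x : Y) : tiltDensity μ f ε x * f x =
      f x + ε * (f x ^ 2 - (∫ y, f y ∂μ) * f x) := by
    rw [tiltDensity]; ring
  have hsq : Integrable (fun x => f x ^ 2 - (∫ y, f y ∂μ) * f x) μ :=
    hf.integrable_sq.sub (hint.const_mul _)
  rw [linearTilt, integral_withDensity_eq_integral_toReal_smul₀
    hu.aemeasurable.ennreal_ofReal (by simp)]
  simp_rw [ENNReal.toReal_ofReal (hε _), smul_eq_mul, hexpand]
  rw [integral_add hint (hsq.const_mul ε), integral_const_mul,
    integral_sub hf.integrable_sq (hint.const_mul _), integral_const_mul, variance_eq_sub hf]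
  simp only [Pi.pow_apply, sq]

lemma ofReal_mul_variance_le_optTransportCost_pi_linearTilt {ι : Type*} [Fintype ι]
    {c : Y → Y → ℝ} (hf : MemLp f 2 μ) (hε : ∀ x, 0 ≤ tiltDensity μ f ε x)
    (hfc : ∀ x y, f y - f x ≤ c x y) :
    ENNReal.ofReal (Fintype.card ι * (ε * Var[f; μ])) ≤
      optTransportCost (fun x y => ∑ i, c (x i) (y i)) (Measure.pi fun _ : ι => μ)
        (Measure.pi fun _ : ι => linearTilt μ f ε) := by
  have := isProbabilityMeasure_linearTilt hf hε
  have hcost := ofReal_sum_integral_sub_le_optTransportCost_pi (ι := ι)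
    (fun _ => hf.integrable one_le_two) (fun _ => integrable_linearTilt hf hε) (fun _ => hfc)
  simpa [integral_linearTilt hf hε] using hcost

lemma relEntropy_pi_linearTilt_le {ι : Type*} [Fintype ι] (hf : MemLp f 2 μ)
    (hε : ∀ x, 0 ≤ tiltDensity μ f ε x) :
    relEntropy (Measure.pi fun _ : ι => linearTilt μ f ε) (Measure.pi fun _ : ι => μ) ≤
      ENNReal.ofReal (Real.exp (Fintype.card ι * (ε ^ 2 * Var[f; μ]))) := by
  refine (relEntropy_pi_withDensity_le (fun _ => memLp_tiltDensity hf) (fun _ => hε)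
    fun _ => integral_tiltDensity (hf.integrable one_le_two)).trans (ENNReal.ofReal_le_ofReal ?_)
  have hnonneg : 0 ≤ ε ^ 2 * Var[f; μ] := mul_nonneg (sq_nonneg ε) (variance_nonneg f μ)
  calc ∏ _ : ι, ∫ x, tiltDensity μ f ε x ^ 2 ∂μ - 1
      ≤ (1 + ε ^ 2 * Var[f; μ]) ^ Fintype.card ι := by simp [integral_tiltDensity_sq hf]
    _ ≤ Real.exp (ε ^ 2 * Var[f; μ]) ^ Fintype.card ι := by
        gcongr
        linarith [Real.add_one_le_exp (ε ^ 2 * Var[f; μ])]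
    _ = Real.exp (Fintype.card ι * (ε ^ 2 * Var[f; μ])) := (Real.exp_nat_mul _ _).symm

lemma tiltDensity_nonneg (hf : Integrable f μ) (hf_mem : ∀ x, f x ∈ Icc 0 1) (hε : ε ∈ Icc 0 1)
    (x : Y) : 0 ≤ tiltDensity μ f ε x := by
  have hmean : ∫ y, f y ∂μ ≤ 1 := by
    simpa using integral_mono hf (integrable_const 1) fun y => (hf_mem y).2
  rw [tiltDensity]
  nlinarith [(hf_mem x).1, hε.1, hε.2]

end LinearTilt

section TransportInequality

open ProbabilityTheory

variable {X : Type*} [PseudoMetricSpace X] [MeasurableSpace X]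

/-- The transportation cost inequality for all powers of `μ`, the cost on a power being the sum
of the distances between coordinates. -/
def DimensionFreeTransportInequality (α : ℝ≥0∞ → ℝ≥0∞) (μ : Measure X) : Prop :=
  ∀ n : ℕ, 1 ≤ n → ∀ ζ : Measure (Fin n → X), IsProbabilityMeasure ζ →
    α (optTransportCost (fun x y => ∑ i, dist (x i) (y i)) (Measure.pi fun _ => μ) ζ) ≤
      relEntropy ζ (Measure.pi fun _ => μ)

variable {α : ℝ≥0∞ → ℝ≥0∞}

lemma dimensionFreeTransportInequality_dirac [MeasurableSingletonClass X] (hα : α 0 = 0)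
    (x₀ : X) : DimensionFreeTransportInequality α (Measure.dirac x₀) := by
  intro n _ ζ _
  rw [pi_dirac fun _ : Fin n => x₀]
  exact transport_inequality_dirac (by simp) hα ζ

lemma DimensionFreeTransportInequality.map_ofReal_mul_variance_le [OpensMeasurableSpace X]
    {μ : Measure X} [IsProbabilityMeasure μ] (h : DimensionFreeTransportInequality α μ)
    (hα : Monotone α) {f : X → ℝ} (hf_lip : LipschitzWith 1 f) (hf_mem : ∀ x, f x ∈ Icc 0 1)
    {N : ℕ} (hN : 1 ≤ N) :
    α (ENNReal.ofReal (N * Var[f; μ])) ≤ ENNReal.ofReal (Real.exp Var[f; μ]) := by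
  have hf : MemLp f 2 μ :=
    memLp_of_bounded (ae_of_all _ hf_mem) hf_lip.continuous.aestronglyMeasurable 2
  have hdist (x y : X) : f y - f x ≤ dist x y := by
    rw [dist_comm]
    simpa using (le_abs_self _).trans (hf_lip.dist_le_mul y x)
  have hN0 : (N : ℝ) ≠ 0 := by exact_mod_cast Nat.one_le_iff_ne_zero.1 hN
  have hε : ∀ x, 0 ≤ tiltDensity μ f (N : ℝ)⁻¹ x :=
    tiltDensity_nonneg (hf.integrable one_le_two) hf_mem
      ⟨by positivity, inv_le_one_of_one_le₀ (by exact_mod_cast hN)⟩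
  have := isProbabilityMeasure_linearTilt hf hε
  have hcost := ofReal_mul_variance_le_optTransportCost_pi_linearTilt (ι := Fin (N ^ 2))
    hf hε hdist
  have hentropy := relEntropy_pi_linearTilt_le (ι := Fin (N ^ 2)) hf hε
  have hcost_scale : Fintype.card (Fin (N ^ 2)) * ((N : ℝ)⁻¹ * Var[f; μ]) = N * Var[f; μ] := by
    simp only [Fintype.card_fin, Nat.cast_pow]; field_simp
  have hentropy_scale : Fintype.card (Fin (N ^ 2)) * ((N : ℝ)⁻¹ ^ 2 * Var[f; μ]) = Var[f; μ] := by
    simp only [Fintype.card_fin, Nat.cast_pow]; field_simp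
  rw [hcost_scale] at hcost
  rw [hentropy_scale] at hentropy
  exact (hα hcost).trans ((h (N ^ 2) (Nat.one_le_pow _ _ hN) _ inferInstance).trans hentropy)

end TransportInequality

section NotDirac

open ProbabilityTheory

variable {X : Type*} [MetricSpace X] [SecondCountableTopology X] [MeasurableSpace X]
  [OpensMeasurableSpace X] {μ : Measure X} [IsProbabilityMeasure μ]

lemma exists_lipschitz_variance_pos (hμ : ¬ ∃ x₀ : X, μ = Measure.dirac x₀) :
    ∃ f : X → ℝ, LipschitzWith 1 f ∧ (∀ x, f x ∈ Icc 0 1) ∧ 0 < Var[f; μ] := by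
  obtain ⟨x₀, hx₀⟩ := Measure.nonempty_support (IsProbabilityMeasure.ne_zero μ)
  let f : X → ℝ := fun x => min (dist x x₀) 1
  have hlip : LipschitzWith 1 f := (LipschitzWith.dist_left x₀).min_const 1
  have hmem (x : X) : f x ∈ Icc 0 1 := ⟨by positivity, min_le_right _ _⟩
  have hf : MemLp f 2 μ :=
    memLp_of_bounded (ae_of_all _ hmem) hlip.continuous.aestronglyMeasurable 2
  refine ⟨f, hlip, hmem, (variance_nonneg f μ).lt_of_ne' fun hvar => hμ ⟨x₀, ?_⟩⟩
  have hconst : ∀ᵐ x ∂μ, f x = ∫ y, f y ∂μ := ae_eq_integral_of_variance_eq_zero hf hvar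
  have hmean : f x₀ = ∫ y, f y ∂μ := Measure.support_subset_of_isClosed
    (isClosed_eq hlip.continuous continuous_const) hconst hx₀
  refine eq_dirac_of_ae_eq ?_
  filter_upwards [hconst] with x hx
  have hzero : min (dist x x₀) 1 = 0 := by
    simpa [f] using hx.trans hmean.symm
  rcases min_choice (dist x x₀) 1 with h | h
  · exact dist_eq_zero.1 (h.symm.trans hzero)
  · exact absurd (h.symm.trans hzero) one_ne_zero

lemma DimensionFreeTransportInequality.eq_zero_of_not_dirac {α : ℝ≥0∞ → ℝ≥0∞}
    (h : DimensionFreeTransportInequality α μ) (hα : IsStarShaped α) (htop : α ⊤ = ⨆ y ∈ Iio ⊤, α y)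
    (hμ : ¬ ∃ x₀ : X, μ = Measure.dirac x₀) (t : ℝ≥0∞) : α t = 0 := by
  obtain ⟨f, hf_lip, hf_mem, hvar⟩ := exists_lipschitz_variance_pos hμ
  have hbdd : ∀ t ≠ ⊤, α t ≤ ENNReal.ofReal (Real.exp Var[f; μ]) := by
    intro t ht
    obtain ⟨N, hN⟩ := exists_nat_ge (t.toReal / Var[f; μ])
    have hle : t ≤ ENNReal.ofReal ((N + 1 : ℕ) * Var[f; μ]) := by
      rw [ENNReal.le_ofReal_iff_toReal_le ht (by positivity), ← div_le_iff₀ hvar]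
      push_cast
      linarith
    exact (hα.monotone htop hle).trans
      (h.map_ofReal_mul_variance_le (hα.monotone htop) hf_lip hf_mem N.succ_pos)
  have hfinite : ∀ t ≠ ⊤, α t = 0 := fun t => hα.eq_zero_of_bounded ENNReal.ofReal_ne_top hbdd
  rcases eq_or_ne t ⊤ with rfl | ht
  · rw [htop]
    simp only [ENNReal.iSup_eq_zero]
    exact fun y hy => hfinite y (ne_of_lt hy)
  · exact hfinite t ht

end NotDirac

theorem dimension_free_T1_iff_trivial_general
    {X : Type*} [MetricSpace X] [SecondCountableTopology X] [MeasurableSpace X]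
    [OpensMeasurableSpace X] (μ : Measure X) [IsProbabilityMeasure μ]
    (α : ℝ≥0∞ → ℝ≥0∞) (hα : IsStarShaped α) (htop : α ⊤ = ⨆ y ∈ Iio ⊤, α y) :
    ((∀ ν : Measure X, IsProbabilityMeasure ν →
        α (optTransportCost (fun x y => dist x y) μ ν) ≤ relEntropy ν μ) ∧
      DimensionFreeTransportInequality α μ) ↔
      (∀ t : ℝ≥0∞, α t = 0) ∨ ∃ x₀ : X, μ = Measure.dirac x₀ := by
  constructor
  · rintro ⟨-, h⟩
    exact or_iff_not_imp_right.2 (h.eq_zero_of_not_dirac hα htop)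
  · rintro (hzero | ⟨x₀, rfl⟩)
    · simp [DimensionFreeTransportInequality, hzero]
    · exact ⟨fun ν _ => transport_inequality_dirac (dist_self x₀) hα.map_zero ν,
        dimensionFreeTransportInequality_dirac hα.map_zero x₀⟩

/-- A convex `T₁` transportation cost inequality has the dimension-free tensorization
property if and only if `α ≡ 0` or `μ` is a Dirac mass. -/
theorem dimension_free_T1_iff_trivial
    {X : Type*} [MetricSpace X] [PolishSpace X] [MeasurableSpace X] [BorelSpace X]
    (μ : Measure X) [IsProbabilityMeasure μ]
    (α : ℝ≥0∞ → ℝ≥0∞) (hα : ClassCFun α) :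
    ((∀ ν : Measure X, IsProbabilityMeasure ν →
        α (optTransportCost (fun x y => dist x y) μ ν) ≤ relEntropy ν μ) ∧
      ∀ n : ℕ, 1 ≤ n → ∀ ζ : Measure (Fin n → X), IsProbabilityMeasure ζ →
        α (optTransportCost (fun x y => ∑ i, dist (x i) (y i))
            (Measure.pi fun _ => μ) ζ) ≤
          relEntropy ζ (Measure.pi fun _ => μ)) ↔
      (∀ t : ℝ≥0∞, α t = 0) ∨ ∃ x₀ : X, μ = Measure.dirac x₀ :=
  dimension_free_T1_iff_trivial_general μ α hα.isStarShaped (hα.2.2.2 ⊤ ENNReal.top_ne_zero)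

end
end

section
/- Let Z be a real random variable such that E[e^{λ_o |Z|}] < ∞ for some λ_o > 0, and let h be its Cramér transform, h(t) = sup_{s ∈ ℝ} ( s t − log E[e^{sZ}] ). Then for every 0 ≤ δ < 1, E[ exp(δ h(Z)) ] ≤ (1 + δ)/(1 − δ). -/
open MeasureTheory ENNReal Set
open scoped NNReal ENNReal

noncomputable section

/-- Extended exponential `ℝ≥0∞ → ℝ≥0∞`. -/
def expEN (v : ℝ≥0∞) : ℝ≥0∞ := if v = ⊤ then ⊤ else ENNReal.ofReal (Real.exp v.toReal)

/-!
Chernoff's inequality with an optimised exponent says that the event where `s * Z - log E[e^{sZ}]`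
exceeds `u` for some `s ≥ 0` has probability at most `e^{-u}`: it is the preimage under `Z` of a set
each of whose points `t` satisfies `P(Z ≥ t) ≤ e^{-u}`. Applying this to `Z` and `-Z` yields
`P(h(Z) > u) ≤ 2 e^{-u}`, and the layer cake formula then gives
`E[e^{δ h(Z)}] ≤ 1 + ∫₀^∞ δ e^{δ u} · 2 e^{-u} du = (1 + δ) / (1 - δ)`.
-/

section

open Function ProbabilityTheory Filter Topology

variable {Ω : Type*} [MeasurableSpace Ω] {P : Measure Ω}

lemma measure_preimage_le_iSup_measure_preimage_Ici {α : Type*} [LinearOrder α]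
    [TopologicalSpace α] [ClosedIicTopology α] [SecondCountableTopology α]
    (P : Measure Ω) (X : Ω → α) (A : Set α) :
    P (X ⁻¹' A) ≤ ⨆ t ∈ A, P (X ⁻¹' Ici t) := by
  by_cases hleast : ∃ a, IsLeast A a
  · obtain ⟨a, haA, ha⟩ := hleast
    exact le_iSup₂_of_le a haA (measure_mono fun ω hω => ha hω)
  -- Without a least element, `A` lies in the union of its open upper rays, and countably many of
  -- these have the same union.
  have hcover : A ⊆ ⋃ t ∈ A, Ioi t := fun x hx => by
    by_contra hx'
    simp only [mem_iUnion, mem_Ioi, not_exists, not_lt] at hx'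
    exact hleast ⟨x, hx, hx'⟩
  obtain ⟨B, hBA, hB, hBU⟩ :=
    TopologicalSpace.isOpen_biUnion_countable A Ioi fun _ _ => isOpen_Ioi
  have hdir : DirectedOn ((· ⊆ ·) on fun t => X ⁻¹' Ioi t) B := fun x hx y hy =>
    (le_total x y).elim
      (fun hxy => ⟨x, hx, Subset.rfl, preimage_mono (Ioi_subset_Ioi hxy)⟩)
      (fun hyx => ⟨y, hy, preimage_mono (Ioi_subset_Ioi hyx), Subset.rfl⟩)
  calc P (X ⁻¹' A) ≤ P (⋃ t ∈ B, X ⁻¹' Ioi t) := by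
        rw [← preimage_iUnion₂, hBU]
        exact measure_mono (preimage_mono hcover)
    _ = ⨆ t ∈ B, P (X ⁻¹' Ioi t) := measure_biUnion_eq_iSup hB hdir
    _ ≤ ⨆ t ∈ A, P (X ⁻¹' Ici t) :=
        (iSup₂_mono fun _ _ => measure_mono (preimage_mono Ioi_subset_Ici_self)).trans
          (biSup_mono hBA)

lemma measure_exists_nonneg_lt_mul_sub_cgf_le [IsFiniteMeasure P] (X : Ω → ℝ) (u : ℝ) :
    P {ω | ∃ s ∈ integrableExpSet X P, 0 ≤ s ∧ u < s * X ω - cgf X P s} ≤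
      ENNReal.ofReal (Real.exp (-u)) := by
  refine (measure_preimage_le_iSup_measure_preimage_Ici P X
    {t | ∃ s ∈ integrableExpSet X P, 0 ≤ s ∧ u < s * t - cgf X P s}).trans (iSup₂_le ?_)
  rintro t ⟨s, hs, hs0, hu⟩
  rw [← ofReal_measureReal]
  refine ENNReal.ofReal_le_ofReal ((measure_ge_le_exp_cgf t hs0 hs).trans ?_)
  exact Real.exp_le_exp.2 (by linarith)

/-- The Cramér transform of `X` under `P`, that is, the convex conjugate of `cgf X P`. Exponents
`s` for which `E[e^{sX}] = ∞` contribute `-∞` and are left out of the supremum; when `P` is a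
probability measure the exponent `s = 0` contributes `0`, so truncating the other terms at `0` by
`ENNReal.ofReal` does not change the supremum. -/
def cramerTransform (X : Ω → ℝ) (P : Measure Ω) (t : ℝ) : ℝ≥0∞ :=
  ⨆ s ∈ integrableExpSet X P, ENNReal.ofReal (s * t - cgf X P s)

lemma cramerTransform_eq_iSup_lintegral {X : Ω → ℝ} (hX : AEMeasurable X P) (t : ℝ) :
    cramerTransform X P t =
      ⨆ (s : ℝ) (_ : ∫⁻ ω, ENNReal.ofReal (Real.exp (s * X ω)) ∂P < ⊤),
        ENNReal.ofReal (s * t - Real.log (∫ ω, Real.exp (s * X ω) ∂P)) := by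
  refine iSup_congr fun s => iSup_congr_Prop ?_ fun _ => rfl
  rw [lt_top_iff_ne_top, lintegral_ofReal_ne_top_iff_integrable
    (aemeasurable_exp_mul s hX) (ae_of_all _ fun _ => (Real.exp_pos _).le)]
  rfl

lemma lowerSemicontinuous_cramerTransform (X : Ω → ℝ) (P : Measure Ω) :
    LowerSemicontinuous (cramerTransform X P) :=
  lowerSemicontinuous_biSup fun _ _ =>
    (ENNReal.continuous_ofReal.comp (by fun_prop)).lowerSemicontinuous

lemma measure_lt_cramerTransform_le [IsFiniteMeasure P] (X : Ω → ℝ) (u : ℝ) :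
    P {ω | ENNReal.ofReal u < cramerTransform X P (X ω)} ≤
      2 * ENNReal.ofReal (Real.exp (-u)) := by
  let chernoffEvent (Y : Ω → ℝ) : Set Ω :=
    {ω | ∃ s ∈ integrableExpSet Y P, 0 ≤ s ∧ u < s * Y ω - cgf Y P s}
  have hsub : {ω | ENNReal.ofReal u < cramerTransform X P (X ω)} ⊆
      chernoffEvent X ∪ chernoffEvent (-X) := by
    intro ω hω
    simp only [cramerTransform, mem_ofPred_eq, lt_iSup_iff] at hω
    obtain ⟨s, hs, hlt⟩ := hω
    have hu : u < s * X ω - cgf X P s := (ENNReal.ofReal_lt_ofReal_iff'.1 hlt).1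
    rcases le_total 0 s with hs0 | hs0
    · exact Or.inl ⟨s, hs, hs0, hu⟩
    · refine Or.inr ⟨-s, ?_, neg_nonneg.2 hs0, ?_⟩
      · simpa [integrableExpSet] using hs
      · simpa [cgf_neg] using hu
  calc P {ω | ENNReal.ofReal u < cramerTransform X P (X ω)}
      ≤ P (chernoffEvent X) + P (chernoffEvent (-X)) :=
        (measure_mono hsub).trans (measure_union_le _ _)
    _ ≤ ENNReal.ofReal (Real.exp (-u)) + ENNReal.ofReal (Real.exp (-u)) :=
        add_le_add (measure_exists_nonneg_lt_mul_sub_cgf_le X u)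
          (measure_exists_nonneg_lt_mul_sub_cgf_le (-X) u)
    _ = 2 * ENNReal.ofReal (Real.exp (-u)) := (two_mul _).symm

lemma integral_mul_exp_mul (a x : ℝ) :
    ∫ t in (0 : ℝ)..x, a * Real.exp (a * t) = Real.exp (a * x) - 1 := by
  rw [intervalIntegral.integral_const_mul, intervalIntegral.mul_integral_comp_mul_left,
    integral_exp, mul_zero, Real.exp_zero]

lemma lintegral_mul_exp_mul_Ioi {a r : ℝ} (ha : 0 ≤ a) (har : a < r) :
    ∫⁻ t in Ioi (0 : ℝ), ENNReal.ofReal (a * Real.exp ((a - r) * t)) =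
      ENNReal.ofReal (a / (r - a)) := by
  have hneg : a - r < 0 := sub_neg.2 har
  rw [← ofReal_integral_eq_lintegral_ofReal ((integrableOn_exp_mul_Ioi hneg 0).const_mul a)
      (ae_of_all _ fun t => by positivity),
    integral_const_mul, integral_exp_mul_Ioi hneg, mul_zero, Real.exp_zero, neg_div,
    ← div_neg, neg_sub, mul_one_div]

lemma lintegral_exp_mul_eq_measure_univ_add {f : Ω → ℝ} {a : ℝ} (ha : 0 ≤ a)
    (hf0 : 0 ≤ᵐ[P] f) (hf : AEMeasurable f P) :
    ∫⁻ ω, ENNReal.ofReal (Real.exp (a * f ω)) ∂P =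
      P univ + ∫⁻ t in Ioi (0 : ℝ), P {ω | t < f ω} * ENNReal.ofReal (a * Real.exp (a * t)) := by
  have hlayer := lintegral_comp_eq_lintegral_meas_lt_mul P hf0 hf
    (g := fun t => a * Real.exp (a * t))
    (fun t _ => Continuous.intervalIntegrable (by fun_prop) _ _)
    (ae_of_all _ fun t => by positivity)
  rw [← hlayer, ← lintegral_one, ← lintegral_add_left measurable_const]
  refine lintegral_congr_ae ?_
  filter_upwards [hf0] with ω hω
  have hexp : 1 ≤ Real.exp (a * f ω) := Real.one_le_exp (mul_nonneg ha hω)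
  rw [integral_mul_exp_mul, ← ENNReal.ofReal_one,
    ← ENNReal.ofReal_add zero_le_one (sub_nonneg.2 hexp), add_sub_cancel]

lemma lintegral_exp_mul_le_of_measure_lt_le {f : Ω → ℝ} {C : ℝ≥0∞} {a r : ℝ} (ha : 0 ≤ a)
    (har : a < r) (hf0 : 0 ≤ᵐ[P] f) (hf : AEMeasurable f P)
    (htail : ∀ t > 0, P {ω | t < f ω} ≤ C * ENNReal.ofReal (Real.exp (-(r * t)))) :
    ∫⁻ ω, ENNReal.ofReal (Real.exp (a * f ω)) ∂P ≤
      P univ + C * ENNReal.ofReal (a / (r - a)) := by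
  rw [lintegral_exp_mul_eq_measure_univ_add ha hf0 hf, ← lintegral_mul_exp_mul_Ioi ha har,
    ← lintegral_const_mul C (by fun_prop)]
  refine add_le_add_right (setLIntegral_mono (by fun_prop) fun t ht => ?_) _
  have hexp : Real.exp (-(r * t)) * (a * Real.exp (a * t)) = a * Real.exp ((a - r) * t) := by
    rw [mul_left_comm, ← Real.exp_add]
    ring_nf
  calc P {ω | t < f ω} * ENNReal.ofReal (a * Real.exp (a * t))
      ≤ C * ENNReal.ofReal (Real.exp (-(r * t))) * ENNReal.ofReal (a * Real.exp (a * t)) := by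
        gcongr
        exact htail t ht
    _ = C * ENNReal.ofReal (a * Real.exp ((a - r) * t)) := by
        rw [mul_assoc, ← ENNReal.ofReal_mul (Real.exp_pos _).le, hexp]

lemma ae_ne_top_of_tendsto_measure_lt {f : Ω → ℝ≥0∞}
    (hf : Tendsto (fun u : ℝ => P {ω | ENNReal.ofReal u < f ω}) atTop (𝓝 0)) :
    ∀ᵐ ω ∂P, f ω ≠ ⊤ := by
  simp only [ae_iff, ne_eq, not_not]
  refine le_antisymm (ge_of_tendsto' hf fun u => measure_mono fun ω (hω : f ω = ⊤) => ?_) zero_le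
  exact ENNReal.ofReal_lt_top.trans_eq hω.symm

lemma expEN_ofReal_mul {a : ℝ} (ha : 0 ≤ a) {v : ℝ≥0∞} (hv : v ≠ ⊤) :
    expEN (ENNReal.ofReal a * v) = ENNReal.ofReal (Real.exp (a * v.toReal)) := by
  rw [expEN, if_neg (ENNReal.mul_ne_top ENNReal.ofReal_ne_top hv), ENNReal.toReal_mul,
    ENNReal.toReal_ofReal ha]

lemma lintegral_expEN_mul_le_of_measure_lt_le {f : Ω → ℝ≥0∞} {C : ℝ≥0} {a r : ℝ} (ha : 0 ≤ a)
    (har : a < r) (hf : AEMeasurable f P)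
    (htail : ∀ t > 0, P {ω | ENNReal.ofReal t < f ω} ≤
      C * ENNReal.ofReal (Real.exp (-(r * t)))) :
    ∫⁻ ω, expEN (ENNReal.ofReal a * f ω) ∂P ≤ P univ + C * ENNReal.ofReal (a / (r - a)) := by
  have hdecay : Tendsto (fun t : ℝ => C * ENNReal.ofReal (Real.exp (-(r * t)))) atTop (𝓝 0) := by
    have hexp : Tendsto (fun t : ℝ => Real.exp (-(r * t))) atTop (𝓝 0) :=
      Real.tendsto_exp_neg_atTop_nhds_zero.comp (tendsto_id.const_mul_atTop (ha.trans_lt har))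
    simpa using ENNReal.Tendsto.const_mul (ENNReal.tendsto_ofReal hexp)
      (Or.inr ENNReal.coe_ne_top)
  have hfin : ∀ᵐ ω ∂P, f ω ≠ ⊤ := ae_ne_top_of_tendsto_measure_lt <|
    tendsto_of_tendsto_of_tendsto_of_le_of_le' tendsto_const_nhds hdecay
      (Eventually.of_forall fun _ => zero_le) ((eventually_gt_atTop 0).mono htail)
  have htail_toReal : ∀ t > 0, P {ω | t < (f ω).toReal} ≤
      C * ENNReal.ofReal (Real.exp (-(r * t))) := fun t ht =>
    (measure_mono fun ω hω => lt_of_not_ge fun hle =>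
      not_le_of_gt hω (ENNReal.toReal_le_of_le_ofReal ht.le hle)).trans (htail t ht)
  calc ∫⁻ ω, expEN (ENNReal.ofReal a * f ω) ∂P
      = ∫⁻ ω, ENNReal.ofReal (Real.exp (a * (f ω).toReal)) ∂P :=
        lintegral_congr_ae (hfin.mono fun _ hω => expEN_ofReal_mul ha hω)
    _ ≤ P univ + C * ENNReal.ofReal (a / (r - a)) :=
        lintegral_exp_mul_le_of_measure_lt_le ha har
          (ae_of_all _ fun _ => ENNReal.toReal_nonneg) hf.ennreal_toReal htail_toReal

theorem cramer_transform_exp_moment_general [IsProbabilityMeasure P] {Z : Ω → ℝ}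
    (hZ : AEMeasurable Z P) {δ : ℝ} (hδ0 : 0 ≤ δ) (hδ1 : δ < 1) :
    ∫⁻ ω, expEN (ENNReal.ofReal δ * cramerTransform Z P (Z ω)) ∂P ≤
      ENNReal.ofReal ((1 + δ) / (1 - δ)) := by
  have hpos : 0 < 1 - δ := sub_pos.2 hδ1
  have hmeas : AEMeasurable (fun ω => cramerTransform Z P (Z ω)) P :=
    (lowerSemicontinuous_cramerTransform Z P).measurable.comp_aemeasurable hZ
  have htail : ∀ u > 0, P {ω | ENNReal.ofReal u < cramerTransform Z P (Z ω)} ≤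
      (2 : ℝ≥0) * ENNReal.ofReal (Real.exp (-(1 * u))) := fun u _ => by
    simpa only [one_mul, ENNReal.coe_ofNat] using measure_lt_cramerTransform_le Z u
  calc ∫⁻ ω, expEN (ENNReal.ofReal δ * cramerTransform Z P (Z ω)) ∂P
      ≤ P univ + (2 : ℝ≥0) * ENNReal.ofReal (δ / (1 - δ)) :=
        lintegral_expEN_mul_le_of_measure_lt_le hδ0 hδ1 hmeas htail
    _ = ENNReal.ofReal (1 + 2 * (δ / (1 - δ))) := by
        rw [measure_univ, ENNReal.ofReal_add zero_le_one (by positivity), ENNReal.ofReal_one,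
          ENNReal.ofReal_mul zero_le_two, ENNReal.ofReal_ofNat, ENNReal.coe_ofNat]
    _ = ENNReal.ofReal ((1 + δ) / (1 - δ)) := by
        congr 1
        field_simp
        ring

end

/-- If `E e^{λ₀|Z|} < ∞` and `h` is the Cramér transform of `Z`, then
`E exp(δ h(Z)) ≤ (1+δ)/(1−δ)` for all `0 ≤ δ < 1`. -/
theorem cramer_transform_exp_moment
    {Ω : Type*} [MeasurableSpace Ω] (P : Measure Ω) [IsProbabilityMeasure P]
    (Z : Ω → ℝ) (hZ : Measurable Z)
    (lam₀ : ℝ) (hlam₀ : 0 < lam₀)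
    (hexp : ∫⁻ ω, ENNReal.ofReal (Real.exp (lam₀ * |Z ω|)) ∂P < ⊤)
    (h : ℝ → ℝ≥0∞)
    (hdef : ∀ t : ℝ, h t =
      ⨆ (s : ℝ) (_ : ∫⁻ ω, ENNReal.ofReal (Real.exp (s * Z ω)) ∂P < ⊤),
        ENNReal.ofReal (s * t - Real.log (∫ ω, Real.exp (s * Z ω) ∂P)))
    (δ : ℝ) (hδ0 : 0 ≤ δ) (hδ1 : δ < 1) :
    ∫⁻ ω, expEN (ENNReal.ofReal δ * h (Z ω)) ∂P ≤ ENNReal.ofReal ((1 + δ) / (1 - δ)) := by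
  rw [funext fun t => (hdef t).trans (cramerTransform_eq_iSup_lintegral hZ.aemeasurable t).symm]
  exact cramer_transform_exp_moment_general hZ.aemeasurable hδ0 hδ1

end
end

section
/- Let X be a Polish space and χ : X → [0,∞) a lower semicontinuous function, and define the semimetric d_χ(x,y) = 1_{x ≠ y}·(χ(x) + χ(y)). Then for all Borel probability measures μ and ν on X with ∫ χ dμ < ∞ and ∫ χ dν < ∞, the optimal transportation cost for the cost d_χ equals the weighted total variation: T_{d_χ}(μ,ν) = ∫ χ d|μ − ν|, where |μ − ν| denotes the total variation measure of the signed measure μ − ν. -/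
open MeasureTheory ENNReal Set
open scoped NNReal ENNReal

noncomputable section
/-!
Write `|μ - ν| = (μ - ν) + (ν - μ)` with truncated differences of measures. A transport plan can
save cost only on the diagonal, and the mass sitting there contributes equally to both marginals;
hence the first marginal of the off-diagonal part dominates `μ - ν` and the second one dominates
`ν - μ`, which gives the lower bound. It is attained by leaving the common part `μ - (μ - ν)` in
place and coupling `μ - ν` with `ν - μ` arbitrarily.
-/

section CommonPart

variable {X : Type*} [MeasurableSpace X] (μ ν : Measure X) [IsFiniteMeasure μ]

lemma measure_sub_sub_add_sub_self : μ - (μ - ν) + (μ - ν) = μ :=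
  Measure.sub_add_cancel_of_le Measure.sub_le

variable [IsFiniteMeasure ν]

lemma totalVariation_toSignedMeasure_sub :
    (μ.toSignedMeasure - ν.toSignedMeasure).totalVariation = (μ - ν) + (ν - μ) := by
  rw [SignedMeasure.totalVariation, Measure.toJordanDecomposition_toSignedMeasure_sub,
    Measure.jordanDecompositionOfToSignedMeasureSub_posPart,
    Measure.jordanDecompositionOfToSignedMeasureSub_negPart]

lemma measure_sub_sub_add_sub_swap : μ - (μ - ν) + (ν - μ) = ν := by
  have hμ : (μ - (μ - ν)).toSignedMeasure + (μ - ν).toSignedMeasure = μ.toSignedMeasure := by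
    rw [← Measure.toSignedMeasure_add, Measure.toSignedMeasure_eq_toSignedMeasure_iff,
      measure_sub_sub_add_sub_self]
  have hsub := Measure.sub_toSignedMeasure_eq_toSignedMeasure_sub (μ := μ) (ν := ν)
  rw [← Measure.toSignedMeasure_eq_toSignedMeasure_iff, Measure.toSignedMeasure_add]
  linear_combination (norm := module) hμ + hsub

variable {μ ν}

lemma measure_sub_univ_eq_of_univ_eq (h : μ univ = ν univ) : (μ - ν) univ = (ν - μ) univ := by
  have hfin : (μ - (μ - ν)) univ ≠ ∞ := measure_ne_top _ _
  rw [← ENNReal.add_right_inj hfin, ← Measure.add_apply, ← Measure.add_apply,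
    measure_sub_sub_add_sub_self, measure_sub_sub_add_sub_swap, h]

end CommonPart

lemma exists_map_fst_eq_map_snd_eq {X Y : Type*} [MeasurableSpace X] [MeasurableSpace Y]
    {μ : Measure X} {ν : Measure Y} [IsFiniteMeasure μ] [IsFiniteMeasure ν]
    (h : μ univ = ν univ) :
    ∃ π : Measure (X × Y), π.map Prod.fst = μ ∧ π.map Prod.snd = ν := by
  rcases eq_or_ne μ 0 with rfl | hμ
  · have hν : ν = 0 := Measure.measure_univ_eq_zero.1 (by simpa using h.symm)
    exact ⟨0, by simp [hν]⟩
  · have hinv : (μ univ)⁻¹ * μ univ = 1 :=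
      ENNReal.inv_mul_cancel (Measure.measure_univ_ne_zero.2 hμ) (measure_ne_top _ _)
    refine ⟨(μ univ)⁻¹ • μ.prod ν, ?_, ?_⟩
    · rw [Measure.map_smul, Measure.map_fst_prod, smul_smul, ← h, hinv, one_smul]
    · rw [Measure.map_smul, Measure.map_snd_prod, smul_smul, hinv, one_smul]

lemma map_sub_map_le_map_restrict_compl {Ω X : Type*} [MeasurableSpace Ω] [MeasurableSpace X]
    (π : Measure Ω) {f g : Ω → X} (hf : Measurable f) (hg : Measurable g)
    {s : Set Ω} (hs : MeasurableSet s) (hfg : EqOn f g s) :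
    π.map f - π.map g ≤ (π.restrict sᶜ).map f := by
  have hmap : (π.restrict s).map f = (π.restrict s).map g :=
    Measure.map_congr ((ae_restrict_mem hs).mono hfg)
  refine Measure.sub_le_of_le_add ?_
  calc π.map f = (π.restrict sᶜ).map f + (π.restrict s).map g := by
        rw [← hmap, ← Measure.map_add _ _ hf, Measure.restrict_compl_add_restrict hs]
    _ ≤ (π.restrict sᶜ).map f + π.map g := by
        gcongr
        exact Measure.restrict_le_self

section OptTransportCost

variable {X : Type*} [MeasurableSpace X] {c : X → X → ℝ} {μ ν : Measure X}

lemma lintegral_sub_add_lintegral_sub_le_optTransportCost [MeasurableEq X] {f g : X → ℝ≥0∞}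
    (hc : ∀ x y, x ≠ y → f x + g y ≤ ENNReal.ofReal (c x y)) :
    ∫⁻ x, f x ∂(μ - ν) + ∫⁻ x, g x ∂(ν - μ) ≤ optTransportCost c μ ν := by
  refine le_iInf₂ fun π ⟨hμ, hν⟩ => ?_
  subst hμ hν
  have hD : MeasurableSet (diagonal X) := measurableSet_diagonal
  have hfst_snd : EqOn Prod.fst Prod.snd (diagonal X) := fun _ hp => hp
  have hfst := map_sub_map_le_map_restrict_compl π measurable_fst measurable_snd hD hfst_snd
  have hsnd := map_sub_map_le_map_restrict_compl π measurable_snd measurable_fst hD hfst_snd.symm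
  calc ∫⁻ x, f x ∂(π.map Prod.fst - π.map Prod.snd) + ∫⁻ x, g x ∂(π.map Prod.snd - π.map Prod.fst)
      ≤ ∫⁻ x, f x ∂(π.restrict (diagonal X)ᶜ).map Prod.fst
          + ∫⁻ x, g x ∂(π.restrict (diagonal X)ᶜ).map Prod.snd :=
        add_le_add (lintegral_mono' hfst le_rfl) (lintegral_mono' hsnd le_rfl)
    _ ≤ ∫⁻ p in (diagonal X)ᶜ, f p.1 ∂π + ∫⁻ p in (diagonal X)ᶜ, g p.2 ∂π :=
        add_le_add (lintegral_map_le _ _) (lintegral_map_le _ _)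
    _ ≤ ∫⁻ p in (diagonal X)ᶜ, (f p.1 + g p.2) ∂π := le_lintegral_add _ _
    _ ≤ ∫⁻ p in (diagonal X)ᶜ, ENNReal.ofReal (c p.1 p.2) ∂π :=
        setLIntegral_mono' hD.compl fun p hp => hc p.1 p.2 hp
    _ ≤ ∫⁻ p, ENNReal.ofReal (c p.1 p.2) ∂π := setLIntegral_le_lintegral _ _

lemma optTransportCost_add_left_le (hc : ∀ x, c x x ≤ 0) (η : Measure X) :
    optTransportCost c (η + μ) (η + ν) ≤ optTransportCost c μ ν := by
  refine le_iInf₂ fun π ⟨hμ, hν⟩ => ?_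
  have hdiag : Measurable fun x : X => (x, x) := measurable_id.prodMk measurable_id
  have hfst : (η.map (fun x => (x, x)) + π).map Prod.fst = η + μ := by
    rw [Measure.map_add _ _ measurable_fst, Measure.map_map measurable_fst hdiag, hμ]
    exact congrArg (· + μ) Measure.map_id
  have hsnd : (η.map (fun x => (x, x)) + π).map Prod.snd = η + ν := by
    rw [Measure.map_add _ _ measurable_snd, Measure.map_map measurable_snd hdiag, hν]
    exact congrArg (· + ν) Measure.map_id
  have hfree : ∫⁻ p, ENNReal.ofReal (c p.1 p.2) ∂η.map (fun x => (x, x)) = 0 := by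
    refine le_antisymm ((lintegral_map_le _ _).trans_eq ?_) zero_le
    simp only [ENNReal.ofReal_of_nonpos (hc _), lintegral_zero]
  calc optTransportCost c (η + μ) (η + ν)
      ≤ ∫⁻ p, ENNReal.ofReal (c p.1 p.2) ∂(η.map (fun x => (x, x)) + π) :=
        iInf₂_le _ ⟨hfst, hsnd⟩
    _ = ∫⁻ p, ENNReal.ofReal (c p.1 p.2) ∂π := by
        rw [lintegral_add_measure, hfree, zero_add]

lemma optTransportCost_le_lintegral_add_lintegral [IsFiniteMeasure μ] [IsFiniteMeasure ν]
    (h : μ univ = ν univ) {f g : X → ℝ≥0∞} (hf : AEMeasurable f μ) (hg : AEMeasurable g ν)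
    (hc : ∀ x y, ENNReal.ofReal (c x y) ≤ f x + g y) :
    optTransportCost c μ ν ≤ ∫⁻ x, f x ∂μ + ∫⁻ x, g x ∂ν := by
  obtain ⟨π, rfl, rfl⟩ := exists_map_fst_eq_map_snd_eq h
  calc optTransportCost c (π.map Prod.fst) (π.map Prod.snd)
      ≤ ∫⁻ p, ENNReal.ofReal (c p.1 p.2) ∂π := iInf₂_le _ ⟨rfl, rfl⟩
    _ ≤ ∫⁻ p, (f p.1 + g p.2) ∂π := lintegral_mono fun p => hc p.1 p.2
    _ = ∫⁻ p, f p.1 ∂π + ∫⁻ p, g p.2 ∂π :=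
        lintegral_add_left' (hf.comp_measurable measurable_fst) _
    _ = ∫⁻ x, f x ∂π.map Prod.fst + ∫⁻ x, g x ∂π.map Prod.snd := by
        rw [lintegral_map' hf measurable_fst.aemeasurable,
          lintegral_map' hg measurable_snd.aemeasurable]

lemma optTransportCost_le_lintegral_sub_add_lintegral_sub [IsFiniteMeasure μ] [IsFiniteMeasure ν]
    (h : μ univ = ν univ) {f g : X → ℝ≥0∞} (hf : AEMeasurable f μ) (hg : AEMeasurable g ν)
    (hdiag : ∀ x, c x x ≤ 0) (hc : ∀ x y, ENNReal.ofReal (c x y) ≤ f x + g y) :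
    optTransportCost c μ ν ≤ ∫⁻ x, f x ∂(μ - ν) + ∫⁻ x, g x ∂(ν - μ) :=
  calc optTransportCost c μ ν
      = optTransportCost c (μ - (μ - ν) + (μ - ν)) (μ - (μ - ν) + (ν - μ)) := by
        rw [measure_sub_sub_add_sub_self, measure_sub_sub_add_sub_swap]
    _ ≤ optTransportCost c (μ - ν) (ν - μ) := optTransportCost_add_left_le hdiag _
    _ ≤ ∫⁻ x, f x ∂(μ - ν) + ∫⁻ x, g x ∂(ν - μ) :=
        optTransportCost_le_lintegral_add_lintegral (measure_sub_univ_eq_of_univ_eq h)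
          (hf.mono_measure Measure.sub_le) (hg.mono_measure Measure.sub_le) hc

end OptTransportCost

open scoped Classical in
theorem transport_dchi_eq_weighted_TV_general
    {X : Type*} [MeasurableSpace X] [MeasurableEq X]
    {χ : X → ℝ} (hχ0 : ∀ x, 0 ≤ χ x)
    {dχ : X → X → ℝ} (hdχ : ∀ x y, dχ x y = if x = y then 0 else χ x + χ y)
    {μ ν : Measure X} [IsFiniteMeasure μ] [IsFiniteMeasure ν] (hμν : μ univ = ν univ)
    (hχμ : AEMeasurable χ μ) (hχν : AEMeasurable χ ν) :
    optTransportCost dχ μ ν =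
      ∫⁻ x, ENNReal.ofReal (χ x)
        ∂((μ.toSignedMeasure - ν.toSignedMeasure).totalVariation) := by
  have hdiag (x : X) : dχ x x = 0 := by rw [hdχ, if_pos rfl]
  have hoff (x y : X) (hxy : x ≠ y) :
      ENNReal.ofReal (dχ x y) = ENNReal.ofReal (χ x) + ENNReal.ofReal (χ y) := by
    rw [hdχ, if_neg hxy, ENNReal.ofReal_add (hχ0 x) (hχ0 y)]
  have hle (x y : X) :
      ENNReal.ofReal (dχ x y) ≤ ENNReal.ofReal (χ x) + ENNReal.ofReal (χ y) := by
    rcases eq_or_ne x y with rfl | hxy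
    · rw [hdiag, ENNReal.ofReal_zero]
      exact zero_le
    · exact (hoff x y hxy).le
  rw [totalVariation_toSignedMeasure_sub, lintegral_add_measure]
  exact le_antisymm
    (optTransportCost_le_lintegral_sub_add_lintegral_sub hμν hχμ.ennreal_ofReal hχν.ennreal_ofReal
      (fun x => (hdiag x).le) hle)
    (lintegral_sub_add_lintegral_sub_le_optTransportCost fun x y hxy => (hoff x y hxy).ge)

open scoped Classical in
/-- `𝒯_{d_χ}(μ,ν) = ∫ χ d|μ − ν|` where `d_χ(x,y) = 1_{x≠y}(χ(x)+χ(y))`. -/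
theorem transport_dchi_eq_weighted_TV
    {X : Type*} [TopologicalSpace X] [PolishSpace X] [MeasurableSpace X] [BorelSpace X]
    (χ : X → ℝ) (hχ0 : ∀ x, 0 ≤ χ x) (hχlsc : LowerSemicontinuous χ)
    (dχ : X → X → ℝ)
    (hdχ : ∀ x y, dχ x y = if x = y then 0 else χ x + χ y)
    (μ ν : Measure X) [IsProbabilityMeasure μ] [IsProbabilityMeasure ν]
    (hμχ : ∫⁻ x, ENNReal.ofReal (χ x) ∂μ < ⊤)
    (hνχ : ∫⁻ x, ENNReal.ofReal (χ x) ∂ν < ⊤) :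
    optTransportCost dχ μ ν =
      ∫⁻ x, ENNReal.ofReal (χ x)
        ∂((μ.toSignedMeasure - ν.toSignedMeasure).totalVariation) :=
  transport_dchi_eq_weighted_TV_general hχ0 hdχ (measure_univ.trans measure_univ.symm)
    hχlsc.measurable.aemeasurable hχlsc.measurable.aemeasurable

end
end

section
/- Let (X,d) be a Polish metric space and μ a Borel probability measure with ∫ d(x_o,x) μ(dx) < ∞ for all x_o ∈ X. Suppose α is in the class C and the T_1-inequality α(T_d(μ,ν)) ≤ H(ν|μ) holds for all Borel probability measures ν on X. Then for every 1-Lipschitz function φ : X → ℝ and every t > 0, μ( { x : φ(x) ≥ ∫ φ dμ + t } ) ≤ e^{−α(t)}. -/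
open MeasureTheory ENNReal Set
open scoped NNReal ENNReal

noncomputable section

/-!
Condition `μ` on `A = {φ ≥ ∫ φ ∂μ + t}`. The entropy of `μ[|A]` relative to `μ` is exactly
`-log (μ A)`, while testing the transport cost from `μ` to `μ[|A]` against the Kantorovich potential
`φ` shows that the cost is at least `t`. The `T₁`-inequality for `μ[|A]` therefore reads
`α t ≤ -log (μ A)`.
-/

open ProbabilityTheory

section OptimalTransport

variable {X : Type*} [MeasurableSpace X]

theorem ofReal_integral_le_lintegral_ofReal_s17 (μ : Measure X) (f : X → ℝ) :
    ENNReal.ofReal (∫ x, f x ∂μ) ≤ ∫⁻ x, ENNReal.ofReal (f x) ∂μ := by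
  by_cases hf : Integrable f μ
  · rw [integral_eq_lintegral_pos_part_sub_lintegral_neg_part hf]
    exact (ofReal_le_ofReal (sub_le_self _ toReal_nonneg)).trans ofReal_toReal_le
  · simp only [integral_undef hf, ofReal_zero, zero_le]

theorem ofReal_integral_add_integral_le_optTransportCost {c : X → X → ℝ} {μ ν : Measure X}
    {φ ψ : X → ℝ} (hφ : Integrable φ μ) (hψ : Integrable ψ ν) (hc : ∀ x y, φ x + ψ y ≤ c x y) :
    ENNReal.ofReal (∫ x, φ x ∂μ + ∫ y, ψ y ∂ν) ≤ optTransportCost c μ ν := by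
  refine le_iInf₂ ?_
  rintro π ⟨rfl, rfl⟩
  have hφ₁ : Integrable (fun p ↦ φ p.1) π := hφ.comp_measurable measurable_fst
  have hψ₂ : Integrable (fun p ↦ ψ p.2) π := hψ.comp_measurable measurable_snd
  rw [integral_map measurable_fst.aemeasurable hφ.aestronglyMeasurable,
    integral_map measurable_snd.aemeasurable hψ.aestronglyMeasurable, ← integral_add hφ₁ hψ₂]
  exact (ofReal_integral_le_lintegral_ofReal_s17 π _).trans
    (lintegral_mono fun p ↦ ofReal_le_ofReal (hc p.1 p.2))

theorem ofReal_le_optTransportCost_of_ae_le {c : X → X → ℝ} {μ ν : Measure X}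
    [IsProbabilityMeasure ν] {φ : X → ℝ} (hφμ : Integrable φ μ) (hφν : Integrable φ ν)
    (hc : ∀ x y, φ y - φ x ≤ c x y) {t : ℝ} (ht : ∀ᵐ y ∂ν, (∫ x, φ x ∂μ) + t ≤ φ y) :
    ENNReal.ofReal t ≤ optTransportCost c μ ν := by
  have hmean : (∫ x, φ x ∂μ) + t ≤ ∫ y, φ y ∂ν := by
    simpa only [integral_const, probReal_univ, one_smul] using
      integral_mono_ae (integrable_const _) hφν ht
  calc ENNReal.ofReal t
      ≤ ENNReal.ofReal (∫ x, -φ x ∂μ + ∫ y, φ y ∂ν) := by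
        rw [integral_neg]
        exact ofReal_le_ofReal (by linarith)
    _ ≤ optTransportCost c μ ν :=
        ofReal_integral_add_integral_le_optTransportCost hφμ.neg hφν
          fun x y ↦ by linarith [hc x y]

end OptimalTransport

section Conditioning

variable {X : Type*} [MeasurableSpace X]

theorem cond_toMeasurable (μ : Measure X) [IsFiniteMeasure μ] (A : Set X) :
    μ[|toMeasurable μ A] = μ[|A] := by
  rw [ProbabilityTheory.cond, ProbabilityTheory.cond, measure_toMeasurable,
    Measure.restrict_toMeasurable (measure_ne_top μ A)]

theorem rnDeriv_cond_ae_eq (μ : Measure X) [IsFiniteMeasure μ] (A : Set X) :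
    μ[|A].rnDeriv μ =ᵐ[μ[|A]] fun _ ↦ (μ A)⁻¹ := by
  wlog hmeas : MeasurableSet A generalizing A
  · simpa only [cond_toMeasurable, measure_toMeasurable] using
      this (toMeasurable μ A) (measurableSet_toMeasurable μ A)
  rcases eq_or_ne (μ A) 0 with hA | hA
  · simp only [cond_eq_zero_of_meas_eq_zero hA, ae_zero, Filter.EventuallyEq, Filter.eventually_bot]
  filter_upwards [cond_absolutelyContinuous.ae_le
      (Measure.rnDeriv_smul_left_of_ne_top (μ.restrict A) μ (inv_ne_top.2 hA)),
    cond_absolutelyContinuous.ae_le (Measure.rnDeriv_restrict_self μ hmeas),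
    ae_cond_mem hmeas] with x hsmul hrestrict hx
  rw [ProbabilityTheory.cond, hsmul, Pi.smul_apply, hrestrict, indicator_of_mem hx, Pi.one_apply,
    smul_eq_mul, mul_one]

theorem relEntropy_cond (μ : Measure X) [IsFiniteMeasure μ] {A : Set X} (hA : μ A ≠ 0) :
    relEntropy μ[|A] μ = ENNReal.ofReal (-Real.log (μ A).toReal) := by
  have := cond_isProbabilityMeasure hA
  have hlog : (fun x ↦ Real.log (μ[|A].rnDeriv μ x).toReal) =ᵐ[μ[|A]]
      fun _ ↦ -Real.log (μ A).toReal := by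
    filter_upwards [rnDeriv_cond_ae_eq μ A] with x hx
    rw [hx, toReal_inv, Real.log_inv]
  rw [relEntropy, if_pos ⟨cond_absolutelyContinuous, (integrable_const _).congr hlog.symm⟩,
    integral_congr_ae hlog, integral_const, probReal_univ, one_smul]

theorem integrable_cond {E : Type*} [NormedAddCommGroup E] {μ : Measure X} {A : Set X} {f : X → E}
    (hf : Integrable f μ) : Integrable f μ[|A] := by
  rcases eq_or_ne (μ A) 0 with hA | hA
  · rw [cond_eq_zero_of_meas_eq_zero hA]
    exact integrable_zero_measure
  · exact hf.restrict.smul_measure (inv_ne_top.2 hA)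

end Conditioning

theorem expEN_mono : Monotone expEN := by
  intro v w hvw
  by_cases hw : w = ⊤
  · simp only [hw, expEN, if_true, le_top]
  · rw [expEN, expEN, if_neg (ne_top_of_le_ne_top hw hvw), if_neg hw]
    exact ofReal_le_ofReal (Real.exp_le_exp.2 (toReal_mono hw hvw))

theorem expEN_ofReal_neg_log_toReal {p : ℝ≥0∞} (hp₀ : p ≠ 0) (hp₁ : p ≤ 1) :
    expEN (ENNReal.ofReal (-Real.log p.toReal)) = p⁻¹ := by
  have hp : p ≠ ⊤ := ne_top_of_le_ne_top one_ne_top hp₁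
  have hpos : 0 < p.toReal := toReal_pos hp₀ hp
  have hlog : 0 ≤ -Real.log p.toReal :=
    neg_nonneg.2 (Real.log_nonpos hpos.le (toReal_le_of_le_ofReal zero_le_one (by simpa using hp₁)))
  rw [expEN, if_neg ofReal_ne_top, toReal_ofReal hlog, Real.exp_neg, Real.exp_log hpos,
    ofReal_inv_of_pos hpos, ofReal_toReal hp]

theorem integrable_of_lipschitzWith {X E : Type*} [PseudoEMetricSpace X] [MeasurableSpace X]
    [OpensMeasurableSpace X] [NormedAddCommGroup E] [SecondCountableTopologyEither X E]
    {μ : Measure X} [IsFiniteMeasure μ] {K : ℝ≥0} {f : X → E} (hf : LipschitzWith K f) {x₀ : X}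
    (hmom : ∫⁻ x, edist x₀ x ∂μ < ⊤) : Integrable f μ := by
  refine ⟨hf.continuous.aestronglyMeasurable, ?_⟩
  have hbound (x : X) : ‖f x‖ₑ ≤ ‖f x₀‖ₑ + K * edist x₀ x := by
    rw [← edist_zero_right, ← edist_zero_right, add_comm, edist_comm x₀]
    exact (edist_triangle (f x) (f x₀) 0).trans (add_le_add_left (hf x x₀) _)
  calc ∫⁻ x, ‖f x‖ₑ ∂μ
      ≤ ∫⁻ x, (‖f x₀‖ₑ + K * edist x₀ x) ∂μ := lintegral_mono hbound
    _ = ‖f x₀‖ₑ * μ univ + K * ∫⁻ x, edist x₀ x ∂μ := by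
        rw [lintegral_add_left measurable_const, lintegral_const,
          lintegral_const_mul' _ _ coe_ne_top]
    _ < ⊤ := add_lt_top.2
        ⟨mul_lt_top enorm_lt_top (measure_lt_top μ _), mul_lt_top coe_lt_top hmom⟩

theorem T1_lipschitz_deviation_general {X : Type*} [MeasurableSpace X]
    (μ : Measure X) [IsProbabilityMeasure μ] (c : X → X → ℝ)
    (α : ℝ≥0∞ → ℝ≥0∞) (hα : Monotone α)
    (hT1 : ∀ ν : Measure X, IsProbabilityMeasure ν →
      α (optTransportCost c μ ν) ≤ relEntropy ν μ)
    (φ : X → ℝ) (hφ : Integrable φ μ) (hc : ∀ x y, φ y - φ x ≤ c x y) (t : ℝ) :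
    μ {x | (∫ y, φ y ∂μ) + t ≤ φ x} ≤ (expEN (α (ENNReal.ofReal t)))⁻¹ := by
  set A := {x | (∫ y, φ y ∂μ) + t ≤ φ x}
  rcases eq_or_ne (μ A) 0 with hA₀ | hA₀
  · exact hA₀.trans_le zero_le
  have hprob := cond_isProbabilityMeasure hA₀
  have hA : NullMeasurableSet A μ := nullMeasurableSet_le aemeasurable_const hφ.aemeasurable
  have hcost : ENNReal.ofReal t ≤ optTransportCost c μ μ[|A] :=
    ofReal_le_optTransportCost_of_ae_le hφ (integrable_cond hφ) hc (ae_cond_mem₀ hA)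
  have hentropy : α (ENNReal.ofReal t) ≤ ENNReal.ofReal (-Real.log (μ A).toReal) :=
    relEntropy_cond μ hA₀ ▸ (hα hcost).trans (hT1 _ hprob)
  rw [ENNReal.le_inv_iff_le_inv, ← expEN_ofReal_neg_log_toReal hA₀ prob_le_one]
  exact expEN_mono hentropy

/-- Gaussian-type deviation bound for Lipschitz functions under a `T₁`-inequality. -/
theorem T1_lipschitz_deviation
    {X : Type*} [MetricSpace X] [PolishSpace X] [MeasurableSpace X] [BorelSpace X]
    (μ : Measure X) [IsProbabilityMeasure μ]
    (hmom : ∀ x₀ : X, ∫⁻ x, ENNReal.ofReal (dist x₀ x) ∂μ < ⊤)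
    (α : ℝ≥0∞ → ℝ≥0∞) (hα : ClassCFun α)
    (hT1 : ∀ ν : Measure X, IsProbabilityMeasure ν →
      α (optTransportCost (fun x y => dist x y) μ ν) ≤ relEntropy ν μ)
    (φ : X → ℝ) (hφ : LipschitzWith 1 φ)
    (t : ℝ) (ht : 0 < t) :
    μ {x | (∫ y, φ y ∂μ) + t ≤ φ x} ≤ (expEN (α (ENNReal.ofReal t)))⁻¹ := by
  obtain ⟨x₀⟩ := nonempty_of_isProbabilityMeasure μ
  exact T1_lipschitz_deviation_general μ _ α hα.1 hT1 φ
    (integrable_of_lipschitzWith hφ (by simpa only [edist_dist] using hmom x₀))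
    (fun x y ↦ by simpa [dist_comm x y, add_comm] using hφ.le_add_mul y x) t

end
end
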